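/- arXiv:math-ph/9904013 — 3 statements merged into one kernel-verified Lean document; each statement's English description precedes it below -/
import Mathlib

section
/- Let n ≥ 4 be an integer and let μ₂ be the admissible diffusive profile. Then y^{δ−2}(μ₂(y) − λ y^{−δ}) → λ₀ as y → 0⁺, where λ₀ = (λ/(2κ)) · (−2n κ₃ δ(δ+1) − κ(δ − 2ε)) / ((n−1)δ(δ+1) + 2(2δ−1)) with κ₃ = −κ/12, and λ₀ > 0; moreover there exists λ₁ ≠ 0 such that y^{δ−4}(μ₂(y) − λ y^{−δ} − λ₀ y^{2−δ}) → λ₁ as y → 0⁺. -/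
noncomputable def kap : ℝ := 1 / Real.sqrt Real.pi

noncomputable def kap3 : ℝ := -kap / 12

noncomputable def eps (n : ℕ) : ℝ := 1 / ((n : ℝ) - 1)

noncomputable def del (n : ℕ) : ℝ := ((n : ℝ) + 2) / ((n : ℝ) - 1)

noncomputable def lam (n : ℕ) : ℝ :=
  (del n * (del n + 1) / (2 * kap) ^ n) ^ (1 / ((n : ℝ) - 1))

noncomputable def lam0 (n : ℕ) : ℝ :=
  (lam n / (2 * kap)) *
    (-2 * (n : ℝ) * kap3 * del n * (del n + 1) - kap * (del n - 2 * eps n)) /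
    (((n : ℝ) - 1) * del n * (del n + 1) + 2 * (2 * del n - 1))

noncomputable def mu1 (y : ℝ) : ℝ :=
  (2 / Real.sqrt Real.pi) * ∫ σ in (0:ℝ)..(y / 2), Real.exp (-σ ^ 2)

def IsDiffusiveProfile (n : ℕ) (μ : ℝ → ℝ) : Prop :=
  ContDiffOn ℝ 2 μ (Set.Ioi 0) ∧
  (∀ y ∈ Set.Ioi (0:ℝ), 0 < μ y) ∧
  (∀ y ∈ Set.Ioi (0:ℝ),
    deriv (deriv μ) y + y / 2 * deriv μ y + eps n * μ y = (2 * mu1 y * μ y) ^ n) ∧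
  Filter.Tendsto (fun y : ℝ => y ^ del n * μ y) (nhdsWithin 0 (Set.Ioi 0)) (nhds (lam n)) ∧
  Filter.Tendsto (fun y : ℝ => y ^ (2 * eps n) * μ y) Filter.atTop (nhds 0)

namespace DP
open Filter Topology Set Asymptotics

/-- `u = 1 + α y² + β y⁴ + O(y⁶)` at `0⁺`. -/
def Ex (u : ℝ → ℝ) (α β : ℝ) : Prop :=
  (fun y => u y - (1 + α * y ^ 2 + β * y ^ 4)) =O[𝓝[>] (0:ℝ)] (fun y => y ^ 6)

lemma bigO_one_of_cont (f : ℝ → ℝ) (hf : Continuous f) :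
    f =O[𝓝[>] (0:ℝ)] (fun _ => (1:ℝ)) :=
  (hf.tendsto 0 |>.mono_left nhdsWithin_le_nhds).isBigO_one ℝ

lemma Ex.mul {u v : ℝ → ℝ} {α β α' β' : ℝ} (hu : Ex u α β) (hv : Ex v α' β') :
    Ex (fun y => u y * v y) (α + α') (β + α * α' + β') := by
  unfold Ex at *
  have h1 := hu.mul (bigO_one_of_cont (fun y => 1 + α' * y ^ 2 + β' * y ^ 4) (by fun_prop))
  have h2 := hv.mul (bigO_one_of_cont (fun y => 1 + α * y ^ 2 + β * y ^ 4) (by fun_prop))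
  have h3 := hv.trans (bigO_one_of_cont (fun y => y ^ 6) (by fun_prop))
  have h4 := hu.mul h3
  have h5 := (isBigO_refl (fun y : ℝ => y ^ 6) (𝓝[>] (0:ℝ))).mul
    (bigO_one_of_cont (fun y => (α * β' + β * α') + β * β' * y ^ 2) (by fun_prop))
  have h6 := ((h1.add h2).add h4).add h5
  simp only [mul_one] at h6
  refine h6.congr_left ?_
  intro y; ring

lemma Ex.pow {u : ℝ → ℝ} {α β : ℝ} (hu : Ex u α β) (n : ℕ) :
    Ex (fun y => u y ^ n) (n * α) (n * β + n * (n - 1) / 2 * α ^ 2) := by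
  induction n with
  | zero =>
    unfold Ex
    simp
    exact isBigO_zero _ _
  | succ k ih =>
    have h := ih.mul hu
    simp only [← pow_succ] at h
    convert h using 1
    · push_cast; ring
    · push_cast; ring

lemma Ex.tendsto {u : ℝ → ℝ} {α β : ℝ} (hu : Ex u α β) : Tendsto u (𝓝[>] (0:ℝ)) (𝓝 1) := by
  have h1 : Tendsto (fun y : ℝ => y ^ 6) (𝓝[>] (0:ℝ)) (𝓝 0) := by
    have : Continuous (fun y : ℝ => y ^ 6) := by fun_prop
    simpa using (this.tendsto 0).mono_left nhdsWithin_le_nhds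
  have h2 := hu.trans_tendsto h1
  have h3 : Tendsto (fun y : ℝ => 1 + α * y ^ 2 + β * y ^ 4) (𝓝[>] (0:ℝ)) (𝓝 1) := by
    have : Continuous (fun y : ℝ => 1 + α * y ^ 2 + β * y ^ 4) := by fun_prop
    simpa using (this.tendsto 0).mono_left nhdsWithin_le_nhds
  simpa using h2.add h3

lemma kap_pos : 0 < kap := by unfold kap; positivity

lemma exp_est {s : ℝ} (h0 : 0 ≤ s) (h1 : s ≤ 1) :
    |Real.exp (-s) - (1 - s + s ^ 2 / 2)| ≤ s ^ 3 := by
  have h := Real.exp_bound (x := -s) (by rw [abs_neg, abs_of_nonneg h0]; exact h1) (n := 3) (by norm_num)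
  simp [Finset.sum_range_succ, abs_of_nonneg h0, Nat.factorial] at h
  have e : (1 - s + s ^ 2 / 2) = 1 + -s + s ^ 2 / 2 := by ring
  rw [e]
  refine h.trans ?_
  have : 0 ≤ s ^ 3 := by positivity
  nlinarith

lemma mu1_est {y : ℝ} (h0 : 0 < y) (h1 : y ≤ 1) :
    |mu1 y - kap * y * (1 + (-1/12) * y ^ 2 + (1/160) * y ^ 4)| ≤ kap * y * y ^ 6 := by
  have hi : ∫ σ in (0:ℝ)..(y / 2), (1 - σ ^ 2 + (σ ^ 2) ^ 2 / 2)
      = y / 2 - (y / 2) ^ 3 / 3 + (y / 2) ^ 5 / 10 := by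
    have hd : ∀ x ∈ uIcc (0:ℝ) (y / 2), HasDerivAt (fun x : ℝ => x - x ^ 3 / 3 + x ^ 5 / 10)
        (1 - x ^ 2 + (x ^ 2) ^ 2 / 2) x := by
      intro x _
      have := ((hasDerivAt_id x).sub ((hasDerivAt_pow 3 x).div_const 3)).add
        ((hasDerivAt_pow 5 x).div_const 10)
      refine HasDerivAt.congr_deriv this ?_
      push_cast; ring
    rw [intervalIntegral.integral_eq_sub_of_hasDerivAt hd
      (Continuous.intervalIntegrable (by fun_prop) _ _)]
    simp
  have hb : ‖∫ σ in (0:ℝ)..(y / 2), (Real.exp (-σ ^ 2) - (1 - σ ^ 2 + (σ ^ 2) ^ 2 / 2))‖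
      ≤ y ^ 6 * |y / 2 - 0| := by
    apply intervalIntegral.norm_integral_le_of_norm_le_const
    intro x hx
    rw [uIoc_of_le (by positivity)] at hx
    have hx2 : x ≤ y := by linarith [hx.2]
    have hx1 : x ^ 2 ≤ 1 := by nlinarith [hx.1]
    refine (exp_est (sq_nonneg x) hx1).trans ?_
    rw [← pow_mul]
    exact pow_le_pow_left₀ hx.1.le hx2 6
  rw [intervalIntegral.integral_sub (Continuous.intervalIntegrable (by fun_prop) _ _)
    (Continuous.intervalIntegrable (by fun_prop) _ _), hi, Real.norm_eq_abs, sub_zero,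
    abs_of_pos (by positivity : 0 < y / 2)] at hb
  have hm : mu1 y = 2 * kap * ∫ σ in (0:ℝ)..(y / 2), Real.exp (-σ ^ 2) := by
    unfold mu1 kap; ring
  rw [hm]
  have : 2 * kap * (∫ σ in (0:ℝ)..(y / 2), Real.exp (-σ ^ 2))
      - kap * y * (1 + (-1/12) * y ^ 2 + (1/160) * y ^ 4)
      = 2 * kap * ((∫ σ in (0:ℝ)..(y / 2), Real.exp (-σ ^ 2)) -
        (y / 2 - (y / 2) ^ 3 / 3 + (y / 2) ^ 5 / 10)) := by ring
  rw [this, abs_mul, abs_of_pos (by have := kap_pos; positivity : 0 < 2 * kap)]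
  have hk := kap_pos
  calc _ ≤ 2 * kap * (y ^ 6 * (y / 2)) := by gcongr
    _ = _ := by ring

/-- normalized `μ₁` -/
noncomputable def gg (y : ℝ) : ℝ := mu1 y / (kap * y)

lemma gg_Ex : Ex gg (-1/12) (1/160) := by
  unfold Ex
  refine IsBigO.of_bound 1 ?_
  have : Ioc (0:ℝ) 1 ∈ 𝓝[>] (0:ℝ) := Ioc_mem_nhdsGT one_pos
  filter_upwards [this] with y hy
  have hk := kap_pos
  have hky : 0 < kap * y := mul_pos hk hy.1
  have h := mu1_est hy.1 hy.2
  rw [Real.norm_eq_abs, Real.norm_eq_abs, one_mul, abs_of_nonneg (by positivity : 0 ≤ y ^ 6)]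
  have e : gg y - (1 + -1 / 12 * y ^ 2 + 1 / 160 * y ^ 4)
      = (mu1 y - kap * y * (1 + (-1/12) * y ^ 2 + (1/160) * y ^ 4)) / (kap * y) := by
    rw [eq_div_iff hky.ne', sub_mul]
    unfold gg
    rw [div_mul_cancel₀ _ hky.ne']; ring
  rw [e, abs_div, abs_of_pos hky, div_le_iff₀ hky]
  linarith

/-- maximum principle -/
lemma mp {z : ℝ → ℝ} {y0 : ℝ} (hz : ContDiffOn ℝ 2 z (Ioi 0))
    (hend : z y0 ≤ 0) (hnear : ∀ᶠ y in 𝓝[>] (0:ℝ), z y < 0)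
    (hmax : ∀ y ∈ Ioo 0 y0, 0 < z y → deriv z y = 0 → 0 < deriv (deriv z) y) :
    ∀ y ∈ Ioc 0 y0, z y ≤ 0 := by
  intro y1 hy1
  by_contra! hpos
  obtain ⟨t, ht, hts⟩ := (mem_nhdsGT_iff_exists_Ioo_subset).1 hnear
  have ht0 : (0:ℝ) < t := ht
  set y2 := min (t / 2) y1 with hy2
  have hy2pos : 0 < y2 := lt_min (by linarith) hy1.1
  have hy2t : y2 < t := (min_le_left _ _).trans_lt (by linarith)
  have hz2 : z y2 < 0 := hts ⟨hy2pos, hy2t⟩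
  have hsub : Icc y2 y0 ⊆ Ioi 0 := fun x hx => lt_of_lt_of_le hy2pos hx.1
  have hy21 : y2 ≤ y1 := min_le_right _ _
  obtain ⟨m, hm, hmm⟩ := isCompact_Icc.exists_isMaxOn (s := Icc y2 y0) ⟨y1, hy21, hy1.2⟩
    (hz.continuousOn.mono hsub)
  have hzm : 0 < z m := hpos.trans_le (hmm ⟨hy21, hy1.2⟩)
  have hm1 : y2 < m := lt_of_le_of_ne hm.1 (by rintro rfl; linarith)
  have hm2 : m < y0 := lt_of_le_of_ne hm.2 (by rintro rfl; linarith)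
  have hloc : IsLocalMax z m := hmm.isLocalMax (Icc_mem_nhds hm1 hm2)
  have hd0 : deriv z m = 0 := hloc.deriv_eq_zero
  have hmpos : 0 < m := hy2pos.trans hm1
  have hdd := hmax m ⟨hmpos, hm2⟩ hzm hd0
  have hmin : IsLocalMin z m := isLocalMin_of_deriv_deriv_pos hdd hd0
    (hz.continuousOn.continuousAt (Ioi_mem_nhds hmpos))
  have hc : z =ᶠ[𝓝 m] fun _ => z m := by
    filter_upwards [hloc, hmin] with x h1 h2
    exact le_antisymm h1 h2
  have h1 : deriv z =ᶠ[𝓝 m] fun _ => 0 := by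
    have := hc.deriv
    simpa using this
  have h2 : deriv (deriv z) m = 0 := by
    rw [h1.deriv_eq]; simp
  linarith

/-- second order derivatives of `σ μ + Σ pᵢ y^{sᵢ}` -/
lemma derivs {μ : ℝ → ℝ} (hμ : ContDiffOn ℝ 2 μ (Ioi 0)) (σ p0 p2 p4 p5 s0 s2 s4 s5 : ℝ) :
    let z := fun y : ℝ => σ * μ y + p0 * y ^ s0 + p2 * y ^ s2 + p4 * y ^ s4 + p5 * y ^ s5
    ContDiffOn ℝ 2 z (Ioi 0) ∧ ∀ y, 0 < y →
      deriv z y = σ * deriv μ y + p0 * (s0 * y ^ (s0 - 1)) + p2 * (s2 * y ^ (s2 - 1))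
        + p4 * (s4 * y ^ (s4 - 1)) + p5 * (s5 * y ^ (s5 - 1)) ∧
      deriv (deriv z) y = σ * deriv (deriv μ) y + p0 * (s0 * ((s0 - 1) * y ^ (s0 - 1 - 1)))
        + p2 * (s2 * ((s2 - 1) * y ^ (s2 - 1 - 1)))
        + p4 * (s4 * ((s4 - 1) * y ^ (s4 - 1 - 1)))
        + p5 * (s5 * ((s5 - 1) * y ^ (s5 - 1 - 1))) := by
  intro z
  have hp : ∀ s : ℝ, ContDiffOn ℝ 2 (fun y : ℝ => y ^ s) (Ioi 0) := by
    intro s x hx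
    exact (Real.contDiffAt_rpow_const_of_ne (ne_of_gt hx)).contDiffWithinAt
  have hdp : ∀ s y : ℝ, 0 < y → HasDerivAt (fun y : ℝ => y ^ s) (s * y ^ (s - 1)) y :=
    fun s y hy => Real.hasDerivAt_rpow_const (Or.inl hy.ne')
  have hd : ∀ y, 0 < y → HasDerivAt μ (deriv μ y) y := fun y hy =>
    ((hμ.differentiableOn (by norm_num)).differentiableAt (Ioi_mem_nhds hy)).hasDerivAt
  have hdc : ContDiffOn ℝ 1 (deriv μ) (Ioi 0) :=
    ((contDiffOn_succ_iff_deriv_of_isOpen (n := 1) isOpen_Ioi).1 (by simpa [one_add_one_eq_two] using hμ)).2.2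
  have hdd : ∀ y, 0 < y → HasDerivAt (deriv μ) (deriv (deriv μ) y) y := fun y hy =>
    ((hdc.differentiableOn (by norm_num)).differentiableAt (Ioi_mem_nhds hy)).hasDerivAt
  have h1 : ∀ y, 0 < y → deriv z y = σ * deriv μ y + p0 * (s0 * y ^ (s0 - 1))
      + p2 * (s2 * y ^ (s2 - 1))
        + p4 * (s4 * y ^ (s4 - 1)) + p5 * (s5 * y ^ (s5 - 1)) := fun y hy =>
    ((((((hd y hy).const_mul σ).add ((hdp s0 y hy).const_mul p0)).add
      ((hdp s2 y hy).const_mul p2)).add ((hdp s4 y hy).const_mul p4)).add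
      ((hdp s5 y hy).const_mul p5)).deriv
  refine ⟨?_, fun y hy => ⟨h1 y hy, ?_⟩⟩
  · exact ((((contDiffOn_const.mul hμ).add (contDiffOn_const.mul (hp s0))).add
      (contDiffOn_const.mul (hp s2))).add (contDiffOn_const.mul (hp s4))).add
      (contDiffOn_const.mul (hp s5))
  · have he : deriv z =ᶠ[𝓝 y] fun y => σ * deriv μ y + p0 * (s0 * y ^ (s0 - 1))
      + p2 * (s2 * y ^ (s2 - 1))
        + p4 * (s4 * y ^ (s4 - 1)) + p5 * (s5 * y ^ (s5 - 1)) := by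
      filter_upwards [Ioi_mem_nhds hy] with x hx using h1 x hx
    rw [he.deriv_eq]
    exact ((((((hdd y hy).const_mul σ).add (((hdp (s0-1) y hy).const_mul s0).const_mul p0)).add
      (((hdp (s2-1) y hy).const_mul s2).const_mul p2)).add
      (((hdp (s4-1) y hy).const_mul s4).const_mul p4)).add
      (((hdp (s5-1) y hy).const_mul s5).const_mul p5)).deriv

/-- residual of the approximate solution -/
noncomputable def resid (d e c0 c2 c4 M : ℝ) (n : ℕ) (y : ℝ) : ℝ :=
  c0 * (d * (d + 1)) + c2 * ((2 - d) * (1 - d)) * y ^ 2 + c4 * ((4 - d) * (3 - d)) * y ^ 4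
    + y ^ 2 * ((e - d / 2) * c0 + (e + 1 - d / 2) * c2 * y ^ 2 + (e + 2 - d / 2) * c4 * y ^ 4)
    - M * (c0 + c2 * y ^ 2 + c4 * y ^ 4) ^ n

/-- one-sided comparison -/
lemma compare {μ : ℝ → ℝ} (hμ : ContDiffOn ℝ 2 μ (Ioi 0)) (n : ℕ) (d e c0 c2 c4 : ℝ)
    (M : ℝ → ℝ) (w : ℝ → ℝ) (hw : ∀ y, 0 < y → μ y = y ^ (-d) * w y)
    (hode : ∀ y, 0 < y → deriv (deriv μ) y + y / 2 * deriv μ y + e * μ y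
      = y ^ (-d) / y ^ 2 * (M y * w y ^ n))
    (hlim : Tendsto w (𝓝[>] 0) (𝓝 c0))
    (S : ℝ → ℝ) (hS : ∀ y, S y * (w y - (c0 + c2 * y ^ 2 + c4 * y ^ 4))
      = w y ^ n - (c0 + c2 * y ^ 2 + c4 * y ^ 4) ^ n)
    (y0 C r K : ℝ) (hy0 : 0 < y0)
    (hE : ∀ y ∈ Ioc 0 y0, |resid d e c0 c2 c4 (M y) n y| ≤ C * y ^ 5)
    (h1 : ∀ y ∈ Ioc 0 y0, 0 < M y * S y - e * y ^ 2)
    (h2 : ∀ y ∈ Ioc 0 y0, r ≤ M y * S y - (5 - d) * (4 - d) - ((5 - d) / 2 + e) * y ^ 2)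
    (h3 : ∀ y ∈ Ioc 0 y0, 0 < M y * S y - d * (d + 1) + (d / 2 - e) * y ^ 2)
    (hK : C ≤ K * r) (hK0 : 0 ≤ K) (σ : ℝ) (hσ : σ = 1 ∨ σ = -1)
    (hK1 : σ * (w y0 - (c0 + c2 * y0 ^ 2 + c4 * y0 ^ 4)) ≤ K * y0 ^ 5) (η : ℝ) (hη : 0 < η) :
    ∀ y ∈ Ioc 0 y0, σ * (w y - (c0 + c2 * y ^ 2 + c4 * y ^ 4)) ≤ K * y ^ 5 + η := by
  obtain ⟨hzc, hzd⟩ := derivs hμ σ (-σ * c0 - η) (-σ * c2) (-σ * c4) (-K) (-d) (2 - d) (4 - d) (5 - d)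
  set z := fun y : ℝ => σ * μ y + (-σ * c0 - η) * y ^ (-d) + (-σ * c2) * y ^ (2 - d)
    + (-σ * c4) * y ^ (4 - d) + (-K) * y ^ (5 - d) with hzdef
  have e1 : ∀ y : ℝ, 0 < y → ∀ k : ℕ, y ^ ((k:ℝ) - d) = y ^ k * y ^ (-d) := by
    intro y hy k
    rw [sub_eq_add_neg, Real.rpow_add hy, Real.rpow_natCast]
  have e2 : ∀ y : ℝ, 0 < y → y ^ (2 - d) = y ^ 2 * y ^ (-d) := fun y hy => by
    simpa using e1 y hy 2
  have e4 : ∀ y : ℝ, 0 < y → y ^ (4 - d) = y ^ 4 * y ^ (-d) := fun y hy => by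
    simpa using e1 y hy 4
  have e5 : ∀ y : ℝ, 0 < y → y ^ (5 - d) = y ^ 5 * y ^ (-d) := fun y hy => by
    simpa using e1 y hy 5
  have hzw : ∀ y, 0 < y → z y = y ^ (-d) *
      (σ * (w y - (c0 + c2 * y ^ 2 + c4 * y ^ 4)) - K * y ^ 5 - η) := by
    intro y hy
    simp only [hzdef]
    rw [e2 y hy, e4 y hy, e5 y hy, hw y hy]; ring
  have key : ∀ y ∈ Ioc 0 y0, z y ≤ 0 := by
    apply mp hzc
    · rw [hzw y0 hy0]
      apply mul_nonpos_of_nonneg_of_nonpos (Real.rpow_nonneg hy0.le _)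
      linarith
    · have hc : Tendsto (fun y : ℝ => σ * (w y - (c0 + c2 * y ^ 2 + c4 * y ^ 4)) - K * y ^ 5 - η)
          (𝓝[>] 0) (𝓝 (σ * (c0 - c0) - 0 - η)) := by
        have a1 : Tendsto (fun y : ℝ => c0 + c2 * y ^ 2 + c4 * y ^ 4) (𝓝[>] 0) (𝓝 c0) := by
          have : Continuous (fun y : ℝ => c0 + c2 * y ^ 2 + c4 * y ^ 4) := by fun_prop
          simpa using (this.tendsto 0).mono_left nhdsWithin_le_nhds
        have a2 : Tendsto (fun y : ℝ => K * y ^ 5) (𝓝[>] 0) (𝓝 0) := by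
          have : Continuous (fun y : ℝ => K * y ^ 5) := by fun_prop
          simpa using (this.tendsto 0).mono_left nhdsWithin_le_nhds
        exact (((hlim.sub a1).const_mul σ).sub a2).sub_const η
      have := hc.eventually_lt_const (u := 0) (by simpa using hη)
      filter_upwards [this, self_mem_nhdsWithin] with y hy hy'
      rw [hzw y hy']
      exact mul_neg_of_pos_of_neg (Real.rpow_pos_of_pos hy' _) hy
    · intro y hy hzpos hz0
      have hyp : 0 < y := hy.1
      have hy' : y ∈ Ioc 0 y0 := ⟨hy.1, hy.2.le⟩
      obtain ⟨d1, d2⟩ := hzd y hyp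
      rw [hz0] at d1
      rw [d2]
      have f1 : ∀ s : ℝ, y ^ (s - 1) = y ^ s / y := fun s => by
        rw [Real.rpow_sub_one hyp.ne']
      simp only [f1, e2 y hyp, e4 y hyp, e5 y hyp] at d1 ⊢
      rw [hzw y hyp] at hzpos
      have ho := hode y hyp
      rw [hw y hyp] at ho
      set Y := y ^ (-d) with hY
      have hYp : 0 < Y := Real.rpow_pos_of_pos hyp _
      have hZ := pos_of_mul_pos_right hzpos hYp.le
      have hE' := abs_le.1 (hE y hy')
      have g1 := h1 y hy'
      have g2 := h2 y hy'
      have g3 := h3 y hy'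
      have hSy := hS y
      set P := c0 + c2 * y ^ 2 + c4 * y ^ 4 with hP
      set E := resid d e c0 c2 c4 (M y) n y with hEd
      have hEe : E = resid d e c0 c2 c4 (M y) n y := rfl
      unfold resid at hEe
      rw [← hP] at hEe
      have hpos : 0 < (M y * S y - e * y ^ 2) * (σ * (w y - P) - K * y ^ 5 - η)
          + K * y ^ 5 * (M y * S y - (5 - d) * (4 - d) - ((5 - d) / 2 + e) * y ^ 2)
          + η * (M y * S y - d * (d + 1) + (d / 2 - e) * y ^ 2) - σ * E := by
        have q1 := mul_pos g1 hZ
        have q3 := mul_pos hη g3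
        have hy5 : 0 < y ^ 5 := by positivity
        have q2 : K * y ^ 5 * r ≤ K * y ^ 5 * (M y * S y - (5 - d) * (4 - d) - ((5 - d) / 2 + e) * y ^ 2) := by
          gcongr
        have q4 : C * y ^ 5 ≤ K * y ^ 5 * r := by
          calc C * y ^ 5 ≤ (K * r) * y ^ 5 := by gcongr
            _ = _ := by ring
        have q5 : σ * E ≤ C * y ^ 5 := by
          rcases hσ with rfl | rfl <;> linarith [hE'.1, hE'.2]
        linarith
      have hfin := mul_pos (div_pos hYp (pow_pos hyp 2)) hpos
      refine hfin.trans_eq ?_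
      have ho' : deriv (deriv μ) y = Y / y ^ 2 * (M y * w y ^ n) - y / 2 * deriv μ y - e * (Y * w y) := by
        linarith
      have hwn : w y ^ n = P ^ n + S y * (w y - P) := by linarith
      rw [ho', hwn, hEe]
      have d1' : σ * deriv μ y = -((-σ * c0 - η) * (-d * (Y / y)) + -σ * c2 * ((2 - d) * (y ^ 2 * Y / y)) +
        -σ * c4 * ((4 - d) * (y ^ 4 * Y / y)) + -K * ((5 - d) * (y ^ 5 * Y / y))) := by linarith
      have hsplit : σ * (Y / y ^ 2 * (M y * (P ^ n + S y * (w y - P))) - y / 2 * deriv μ y - e * (Y * w y))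
        = σ * (Y / y ^ 2 * (M y * (P ^ n + S y * (w y - P))) - e * (Y * w y)) - y / 2 * (σ * deriv μ y) := by ring
      rw [hsplit, d1']
      generalize P ^ n = Pn
      rw [hP]
      field_simp
      ring
  intro y hy
  have hk := key y hy
  rw [hzw y hy.1] at hk
  have := nonpos_of_mul_nonpos_right hk (Real.rpow_pos_of_pos hy.1 _)
  linarith

/-- coefficient of `y²` -/
noncomputable def ca (n : ℕ) : ℝ :=
  ((n:ℝ) * (del n * (del n + 1)) / 12 - (del n / 2 - eps n)) /
    (((n:ℝ) - 1) * del n * (del n + 1) + 2 * (2 * del n - 1))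

/-- numerator of the coefficient of `y⁴` -/
noncomputable def cR (n : ℕ) : ℝ :=
  del n * (del n + 1) * ((n:ℝ) * (ca n * (-1/12) + 1/160)
    + (n:ℝ) * ((n:ℝ) - 1) / 2 * (ca n + (-1/12)) ^ 2) - ca n * (eps n + 1 - del n / 2)

/-- coefficient of `y⁴` -/
noncomputable def cb (n : ℕ) : ℝ :=
  cR n / ((4 - del n) * (3 - del n) - n * (del n * (del n + 1)))

lemma castn {n : ℕ} (hn : 4 ≤ n) : (4:ℝ) ≤ n := by exact_mod_cast hn

lemma del_mul {n : ℕ} (hn : 4 ≤ n) : ((n:ℝ) - 1) * del n = n + 2 := by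
  have := castn hn
  unfold del
  rw [mul_div_cancel₀ _ (by linarith)]

lemma del_gt {n : ℕ} (hn : 4 ≤ n) : 1 < del n := by
  have := castn hn
  unfold del
  rw [lt_div_iff₀ (by linarith)]; linarith

lemma den_pos {n : ℕ} (hn : 4 ≤ n) :
    0 < ((n:ℝ) - 1) * del n * (del n + 1) + 2 * (2 * del n - 1) := by
  have := castn hn
  have h1 := del_gt hn
  rw [del_mul hn]
  nlinarith

lemma five_lt {n : ℕ} (hn : 4 ≤ n) :
    (5 - del n) * (4 - del n) < n * (del n * (del n + 1)) := by
  have h4 := castn hn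
  have h1 := del_gt hn
  have h2 := del_mul hn
  have h3 : 20 < (2 * (n:ℝ) + 11) * del n := by
    have : ((n:ℝ) - 1) * 20 < (n - 1) * ((2 * (n:ℝ) + 11) * del n) := by
      have : ((n:ℝ) - 1) * ((2 * (n:ℝ) + 11) * del n) = (2 * (n:ℝ) + 11) * (n + 2) := by
        rw [← h2]; ring
      rw [this]; nlinarith
    exact lt_of_mul_lt_mul_left this (by linarith)
  have h5 : ((n:ℝ) - 1) * del n * del n = (n + 2) * del n := by rw [h2]
  nlinarith

lemma four_lt {n : ℕ} (hn : 4 ≤ n) :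
    (4 - del n) * (3 - del n) - n * (del n * (del n + 1)) < 0 := by
  have h4 := castn hn
  have h1 := del_gt hn
  have h2 := del_mul hn
  have h5 : ((n:ℝ) - 1) * del n * del n = (n + 2) * del n := by rw [h2]
  nlinarith

lemma ca_eq {n : ℕ} (hn : 4 ≤ n) :
    ca n = n * (2 * n ^ 2 - n + 8) / (12 * ((n:ℝ) - 1) * (2 * n ^ 2 + 7 * n + 12)) := by
  have h4 := castn hn
  have hd := den_pos hn
  have h1 : (n:ℝ) - 1 ≠ 0 := by linarith
  have hD : (2 * (n:ℝ) ^ 2 + 7 * n + 12) ≠ 0 := by positivity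
  unfold ca
  have e : (((n:ℝ) - 1) * del n * (del n + 1) + 2 * (2 * del n - 1))
      = (2 * n ^ 2 + 7 * n + 12) / (n - 1) := by
    unfold del; field_simp; ring
  rw [e]
  unfold del eps
  field_simp
  ring

lemma ca_pos {n : ℕ} (hn : 4 ≤ n) : 0 < ca n := by
  have h4 := castn hn
  rw [ca_eq hn]
  have : (0:ℝ) < n - 1 := by linarith
  have : (0:ℝ) < 2 * n ^ 2 - n + 8 := by nlinarith
  positivity

lemma poly_ne (n : ℤ) : -8 * n ^ 7 + 292 * n ^ 6 + 1594 * n ^ 5 - 145 * n ^ 4 - 1930 * n ^ 3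
    - 7984 * n ^ 2 + 7488 * n - 12672 ≠ 0 := by
  intro h
  have h2 := congrArg (Int.cast : ℤ → ZMod 17) h
  push_cast at h2
  generalize (n : ZMod 17) = x at h2
  revert h2
  revert x
  decide

lemma cR_ne {n : ℕ} (hn : 4 ≤ n) : cR n ≠ 0 := by
  have h4 := castn hn
  have h1 : (n:ℝ) - 1 ≠ 0 := by linarith
  have hn0 : (n:ℝ) ≠ 0 := by linarith
  have hD : (2 * (n:ℝ) ^ 2 + 7 * n + 12) ≠ 0 := by positivity
  have hp : -8 * (n:ℝ) ^ 7 + 292 * n ^ 6 + 1594 * n ^ 5 - 145 * n ^ 4 - 1930 * n ^ 3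
    - 7984 * n ^ 2 + 7488 * n - 12672 ≠ 0 := by
    have := poly_ne n
    exact_mod_cast this
  have e : cR n = n * (-8 * (n:ℝ) ^ 7 + 292 * n ^ 6 + 1594 * n ^ 5 - 145 * n ^ 4 - 1930 * n ^ 3
    - 7984 * n ^ 2 + 7488 * n - 12672) / (1440 * (n - 1) ^ 3 * (2 * (n:ℝ) ^ 2 + 7 * n + 12) ^ 2) := by
    unfold cR
    rw [ca_eq hn]
    unfold del eps
    field_simp
    ring
  rw [e]
  positivity

lemma cb_ne {n : ℕ} (hn : 4 ≤ n) : cb n ≠ 0 := div_ne_zero (cR_ne hn) (four_lt hn).ne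

lemma match2 {n : ℕ} (hn : 4 ≤ n) :
    ca n * ((2 - del n) * (1 - del n)) + (eps n - del n / 2)
      = del n * (del n + 1) * (n * (-1/12 + ca n)) := by
  have hd := (den_pos hn).ne'
  have h : ca n * (((n:ℝ) - 1) * del n * (del n + 1) + 2 * (2 * del n - 1))
    = ((n:ℝ) * (del n * (del n + 1)) / 12 - (del n / 2 - eps n)) := by
    unfold ca; rw [div_mul_cancel₀ _ hd]
  linear_combination -h

lemma match4 {n : ℕ} (hn : 4 ≤ n) :
    cb n * ((4 - del n) * (3 - del n)) + (eps n + 1 - del n / 2) * ca n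
      = del n * (del n + 1) * (n * (1/160 + -1/12 * ca n + cb n)
        + n * (n - 1) / 2 * (-1/12 + ca n) ^ 2) := by
  have h : cb n * ((4 - del n) * (3 - del n) - n * (del n * (del n + 1))) = cR n := by
    unfold cb; rw [div_mul_cancel₀ _ (four_lt hn).ne]
  unfold cR at h
  linear_combination h

lemma lam_pos {n : ℕ} (hn : 4 ≤ n) : 0 < lam n := by
  have := kap_pos
  have := del_gt hn
  unfold lam
  positivity

lemma lam_pow {n : ℕ} (hn : 4 ≤ n) : (2 * kap) ^ n * lam n ^ (n - 1) = del n * (del n + 1) := by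
  have hk := kap_pos
  have := del_gt hn
  have h4 := castn hn
  have : lam n ^ (n - 1) = del n * (del n + 1) / (2 * kap) ^ n := by
    unfold lam
    rw [← Real.rpow_natCast, ← Real.rpow_mul (by positivity), Nat.cast_sub (by omega), Nat.cast_one,
      one_div_mul_cancel (by linarith), Real.rpow_one]
  rw [this, mul_div_cancel₀ _ (by positivity)]

lemma lam0_eq (n : ℕ) : lam0 n = lam n * ca n := by
  have hk := kap_pos
  unfold lam0 ca kap3
  field_simp

lemma resid_O {n : ℕ} (hn : 4 ≤ n) :
    (fun y => resid (del n) (eps n) (lam n) (lam n * ca n) (lam n * cb n)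
      ((2 * kap * gg y) ^ n) n y) =O[𝓝[>] (0:ℝ)] (fun y => y ^ 6) := by
  have hp : Ex (fun y => 1 + ca n * y ^ 2 + cb n * y ^ 4) (ca n) (cb n) := by
    unfold Ex; simp only [sub_self]; exact isBigO_zero _ _
  have h := (gg_Ex.mul hp).pow n
  unfold Ex at h
  have hy := (isBigO_refl (fun y : ℝ => y ^ 6) (𝓝[>] (0:ℝ))).const_mul_left
    (lam n * ((eps n + 2 - del n / 2) * cb n))
  have h' := (h.const_mul_left (-(lam n * (del n * (del n + 1))))).add hy
  refine h'.congr_left ?_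
  intro y
  have hl := lam_pow hn
  have hl' : (2 * kap) ^ n * lam n ^ n = lam n * (del n * (del n + 1)) := by
    rw [← hl]
    obtain ⟨m, rfl⟩ : ∃ m, n = m + 1 := ⟨n - 1, by omega⟩
    simp only [Nat.add_sub_cancel]; ring
  unfold resid
  have e : (2 * kap * gg y) ^ n * (lam n + lam n * ca n * y ^ 2 + lam n * cb n * y ^ 4) ^ n
      = lam n * (del n * (del n + 1)) * (gg y * (1 + ca n * y ^ 2 + cb n * y ^ 4)) ^ n := by
    rw [← hl', ← mul_pow, ← mul_pow, ← mul_pow]; congr 1; ring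
  rw [e]
  linear_combination (-lam n * y ^ 2) * match2 hn - lam n * y ^ 4 * match4 hn

lemma main_est (n : ℕ) (hn : 4 ≤ n) (μ : ℝ → ℝ) (hμ : IsDiffusiveProfile n μ) :
    ∃ K y0 : ℝ, 0 < y0 ∧ ∀ y ∈ Ioc 0 y0,
      |y ^ del n * μ y - (lam n + lam n * ca n * y ^ 2 + lam n * cb n * y ^ 4)| ≤ K * y ^ 5 := by
  obtain ⟨hc, -, hode, hlim, -⟩ := hμ
  have h4 := castn hn
  have hk := kap_pos
  set w : ℝ → ℝ := fun y => y ^ del n * μ y with hwd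
  set M : ℝ → ℝ := fun y => (2 * kap * gg y) ^ n with hM
  set P : ℝ → ℝ := fun y => lam n + lam n * ca n * y ^ 2 + lam n * cb n * y ^ 4 with hPd
  set S : ℝ → ℝ := fun y => ∑ i ∈ Finset.range n, w y ^ i * P y ^ (n - 1 - i) with hSd
  have hw : ∀ y, 0 < y → μ y = y ^ (-del n) * w y := by
    intro y hy
    simp only [hwd]
    rw [← mul_assoc, ← Real.rpow_add hy, neg_add_cancel, Real.rpow_zero, one_mul]
  have hode' : ∀ y, 0 < y → deriv (deriv μ) y + y / 2 * deriv μ y + eps n * μ y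
      = y ^ (-del n) / y ^ 2 * (M y * w y ^ n) := by
    intro y hy
    rw [hode y hy]
    have hg : mu1 y = kap * y * gg y := by
      unfold gg; rw [mul_div_cancel₀ _ (by positivity)]
    have e1 : y ^ (-del n) / y ^ 2 = (y * y ^ (-del n)) ^ n := by
      rw [mul_pow, ← Real.rpow_natCast (y ^ (-del n)), ← Real.rpow_mul hy.le,
        ← Real.rpow_natCast y n, ← Real.rpow_add hy, ← Real.rpow_natCast y 2, ← Real.rpow_sub hy]
      congr 1
      have := del_mul hn
      push_cast
      linear_combination this
    rw [e1, hg, hw y hy]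
    simp only [hM]
    rw [← mul_pow, ← mul_pow]; congr 1; ring
  have hP : Tendsto P (𝓝[>] 0) (𝓝 (lam n)) := by
    have : Continuous P := by fun_prop
    simpa [hPd] using (this.tendsto 0).mono_left nhdsWithin_le_nhds
  have hMl : Tendsto M (𝓝[>] 0) (𝓝 ((2 * kap) ^ n)) := by
    simpa using (gg_Ex.tendsto.const_mul (2 * kap)).pow n
  have hSl : Tendsto S (𝓝[>] 0) (𝓝 (n * lam n ^ (n - 1))) := by
    have : Tendsto S (𝓝[>] 0) (𝓝 (∑ i ∈ Finset.range n, lam n ^ i * lam n ^ (n - 1 - i))) := by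
      apply tendsto_finsetSum
      intro i _
      exact (hlim.pow i).mul (hP.pow _)
    convert this using 2
    rw [Finset.sum_congr rfl (g := fun _ => lam n ^ (n - 1))]
    · simp
    · intro i hi
      rw [← pow_add]; congr 1
      have := Finset.mem_range.1 hi
      omega
  have hMS : Tendsto (fun y => M y * S y) (𝓝[>] 0) (𝓝 (n * (del n * (del n + 1)))) := by
    have := hMl.mul hSl
    convert this using 2
    rw [← lam_pow hn]; ring
  have hy2 : ∀ c : ℝ, Tendsto (fun y : ℝ => c * y ^ 2) (𝓝[>] 0) (𝓝 0) := by
    intro c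
    have : Continuous (fun y : ℝ => c * y ^ 2) := by fun_prop
    simpa using (this.tendsto 0).mono_left nhdsWithin_le_nhds
  have hd1 := del_gt hn
  have hdd : 0 < del n * (del n + 1) := by positivity
  obtain ⟨r, hr0, hr⟩ : ∃ r, 0 < r ∧ r < n * (del n * (del n + 1)) - (5 - del n) * (4 - del n) :=
    exists_between (by linarith [five_lt hn])
  have k1 := (hMS.sub (hy2 (eps n))).eventually_const_lt (u := 0) (by
    rw [sub_zero]; positivity)
  have k2 := ((hMS.sub_const ((5 - del n) * (4 - del n))).sub
    (hy2 ((5 - del n) / 2 + eps n))).eventually_const_lt (u := r) (by linarith)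
  have k3 := ((hMS.sub_const (del n * (del n + 1))).add
    (hy2 (del n / 2 - eps n))).eventually_const_lt (u := 0) (by nlinarith)
  obtain ⟨C, hC0, hC⟩ := (resid_O hn).exists_pos
  have k4 := hC.bound
  have k5 : Ioc (0:ℝ) 1 ∈ 𝓝[>] (0:ℝ) := Ioc_mem_nhdsGT one_pos
  obtain ⟨y0, hy0, hsub⟩ := (mem_nhdsGT_iff_exists_Ioc_subset).1
    (inter_mem k5 (inter_mem (inter_mem k1 k2) (inter_mem k3 k4)))
  have hy0 : (0:ℝ) < y0 := hy0
  set K := max (C / r) (|w y0 - P y0| / y0 ^ 5) with hK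
  have hK1 : C ≤ K * r := by
    rw [← div_le_iff₀ hr0]; exact le_max_left _ _
  have hK0 : 0 ≤ K := le_trans (by positivity) (le_max_left _ _)
  have hK2 : |w y0 - P y0| ≤ K * y0 ^ 5 := by
    rw [← div_le_iff₀ (by positivity)]; exact le_max_right _ _
  have hcmp := compare hc n (del n) (eps n) (lam n) (lam n * ca n) (lam n * cb n) M w hw hode' hlim S
    (fun y => (Commute.all (w y) (P y)).geom_sum₂_mul n) y0 C r K hy0
    (by
      intro y hy
      obtain ⟨q5, -, -, q4⟩ := hsub hy
      simp only [mem_ofPred_eq, Real.norm_eq_abs] at q4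
      refine q4.trans ?_
      have hyp : 0 < y := hy.1
      rw [abs_of_nonneg (by positivity)]
      exact mul_le_mul_of_nonneg_left (pow_le_pow_of_le_one hyp.le q5.2 (by norm_num)) hC0.le)
    (fun y hy => (hsub hy).2.1.1) (fun y hy => le_of_lt (hsub hy).2.1.2)
    (fun y hy => (hsub hy).2.2.1) hK1 hK0
  refine ⟨K, y0, hy0, fun y hy => ?_⟩
  have ha := abs_le.1 hK2
  have u1 : 1 * (w y - P y) ≤ K * y ^ 5 := le_of_forall_pos_le_add fun η hη =>
    hcmp 1 (Or.inl rfl) (by linarith [ha.2]) η hη y hy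
  have u2 : (-1) * (w y - P y) ≤ K * y ^ 5 := le_of_forall_pos_le_add fun η hη =>
    hcmp (-1) (Or.inr rfl) (by linarith [ha.1]) η hη y hy
  exact abs_le.2 ⟨by linarith, by linarith⟩

end DP

/-- Asymptotics of the diffusive profile near the origin:
y^{δ−2}(μ₂(y) − λ y^{−δ}) → λ₀ > 0, and for some λ₁ ≠ 0,
y^{δ−4}(μ₂(y) − λ y^{−δ} − λ₀ y^{2−δ}) → λ₁ as y → 0⁺. -/
theorem diffusive_profile_asymptotics_at_zero (n : ℕ) (hn : 4 ≤ n)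
    (μ : ℝ → ℝ) (hμ : IsDiffusiveProfile n μ) :
    (Filter.Tendsto (fun y : ℝ => y ^ (del n - 2) * (μ y - lam n * y ^ (-(del n))))
        (nhdsWithin 0 (Set.Ioi 0)) (nhds (lam0 n)) ∧ 0 < lam0 n) ∧
    ∃ lam1 : ℝ, lam1 ≠ 0 ∧
      Filter.Tendsto (fun y : ℝ => y ^ (del n - 4) *
          (μ y - lam n * y ^ (-(del n)) - lam0 n * y ^ (2 - del n)))
        (nhdsWithin 0 (Set.Ioi 0)) (nhds lam1) := by
  obtain ⟨K, y0, hy0, h⟩ := DP.main_est n hn μ hμ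
  have hc : ∀ f : ℝ → ℝ, Continuous f → Filter.Tendsto f (nhdsWithin 0 (Set.Ioi 0)) (nhds (f 0)) :=
    fun f hf => (hf.tendsto 0).mono_left nhdsWithin_le_nhds
  set r : ℝ → ℝ := fun y => (y ^ del n * μ y - (lam n + lam n * DP.ca n * y ^ 2
    + lam n * DP.cb n * y ^ 4)) / y ^ 4 with hr
  have hr0 : Filter.Tendsto r (nhdsWithin 0 (Set.Ioi 0)) (nhds 0) := by
    have hK := hc (fun y => K * y) (by fun_prop)
    simp only [mul_zero] at hK
    refine squeeze_zero_norm' ?_ hK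
    filter_upwards [Ioc_mem_nhdsGT hy0] with y hy
    have hyp : 0 < y := hy.1
    simp only [hr]
    rw [Real.norm_eq_abs, abs_div, abs_of_pos (by positivity : 0 < y ^ 4),
      div_le_iff₀ (by positivity)]
    refine (h y hy).trans_eq ?_
    ring
  have hrw : ∀ y : ℝ, 0 < y → μ y = y ^ (-(del n)) * (lam n + lam n * DP.ca n * y ^ 2
      + lam n * DP.cb n * y ^ 4 + y ^ 4 * r y) := by
    intro y hy
    simp only [hr]
    rw [mul_div_cancel₀ _ (by positivity), add_sub_cancel, ← mul_assoc, ← Real.rpow_add hy,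
      neg_add_cancel, Real.rpow_zero, one_mul]
  have hsub : ∀ y : ℝ, 0 < y → ∀ k : ℕ, y ^ (del n - k) * y ^ (-(del n)) = 1 / y ^ k := by
    intro y hy k
    rw [← Real.rpow_add hy, sub_add_eq_add_sub, add_neg_cancel, zero_sub, Real.rpow_neg hy.le,
      Real.rpow_natCast, one_div]
  refine ⟨⟨?_, ?_⟩, lam n * DP.cb n, mul_ne_zero (DP.lam_pos hn).ne' (DP.cb_ne hn), ?_⟩
  · have h1 : Filter.Tendsto (fun y => lam n * DP.ca n + lam n * DP.cb n * y ^ 2 + y ^ 2 * r y)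
        (nhdsWithin 0 (Set.Ioi 0)) (nhds (lam n * DP.ca n + lam n * DP.cb n * 0 ^ 2 + 0 ^ 2 * 0)) :=
      (hc (fun y => lam n * DP.ca n + lam n * DP.cb n * y ^ 2) (by fun_prop)).add
        ((hc (fun y => y ^ 2) (by fun_prop)).mul hr0)
    rw [DP.lam0_eq]
    simp only [ne_eq, OfNat.ofNat_ne_zero, not_false_eq_true, zero_pow, mul_zero, add_zero] at h1
    refine h1.congr' ?_
    filter_upwards [self_mem_nhdsWithin] with y hy
    have hyp : 0 < y := hy
    have e := hsub y hyp 2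
    push_cast at e
    have e' : y ^ (del n - 2) * (μ y - lam n * y ^ (-(del n)))
      = (y ^ (del n - 2) * y ^ (-(del n))) * (lam n * DP.ca n * y ^ 2
      + lam n * DP.cb n * y ^ 4 + y ^ 4 * r y) := by
      rw [hrw y hyp]; ring
    rw [e', e]
    field_simp
  · rw [DP.lam0_eq]; exact mul_pos (DP.lam_pos hn) (DP.ca_pos hn)
  · have h1 := hr0.const_add (lam n * DP.cb n)
    rw [add_zero] at h1
    refine h1.congr' ?_
    filter_upwards [self_mem_nhdsWithin] with y hy
    have hyp : 0 < y := hy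
    have e := hsub y hyp 4
    push_cast at e
    have e2 : y ^ (2 - del n) = y ^ 2 * y ^ (-(del n)) := by
      rw [sub_eq_add_neg, Real.rpow_add hyp]; norm_num
    have e' : y ^ (del n - 4) * (μ y - lam n * y ^ (-(del n)) - lam0 n * y ^ (2 - del n))
      = (y ^ (del n - 4) * y ^ (-(del n))) * (lam n * DP.cb n * y ^ 4 + y ^ 4 * r y) := by
      rw [hrw y hyp, e2, DP.lam0_eq]; ring
    rw [e', e]
    field_simp
end

section
/- Let n ≥ 4 be an integer and let μ₂ be the admissible diffusive profile. Then there exists a constant C > 0 such that e^{y²/4} y^{1−2ε} μ₂(y) → C as y → ∞; in particular μ₂ decays like C e^{−y²/4}/y^{1−2ε} at infinity. -/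
open Set Filter Topology

theorem aux_barrier (f f' : ℝ → ℝ) (a c : ℝ) (hd : ∀ y, a ≤ y → HasDerivAt f (f' y) y)
    (ha : f a ≤ c) (hb : ∀ y, a ≤ y → f y = c → f' y < 0) : ∀ y, a ≤ y → f y ≤ c := by
  intro y hy
  refine image_le_of_deriv_right_lt_deriv_boundary (f := f) (f' := f') (a := a) (b := y)
    (B := fun _ => c) (B' := fun _ => 0) ?_ ?_ ha ?_ ?_ ⟨hy, le_rfl⟩
  · intro x hx; exact (hd x hx.1).continuousAt.continuousWithinAt
  · intro x hx; exact (hd x hx.1).hasDerivWithinAt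
  · intro x; exact hasDerivAt_const x c
  · intro x hx h; exact hb x hx.1 h

theorem aux_mono (f f' : ℝ → ℝ) (a : ℝ) (hd : ∀ y, a ≤ y → HasDerivAt f (f' y) y)
    (hb : ∀ y, a ≤ y → 0 ≤ f' y) : MonotoneOn f (Ici a) := by
  refine monotoneOn_of_deriv_nonneg (convex_Ici a) ?_ ?_ ?_
  · intro x hx; exact (hd x hx).continuousAt.continuousWithinAt
  · intro x hx
    rw [interior_Ici] at hx
    exact (hd x (le_of_lt hx)).differentiableAt.differentiableWithinAt
  · intro x hx
    rw [interior_Ici] at hx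
    rw [(hd x (le_of_lt hx)).deriv]
    exact hb x (le_of_lt hx)

/-- Upper bound for the Riccati variable `v`. -/
theorem aux_upper (v p h r h2 L : ℝ → ℝ) (e Y : ℝ) (hY : 16 ≤ Y) (he0 : 0 < e) (he1 : e ≤ 1 / 3)
    (hp : ∀ y, Y ≤ y → y / 2 ≤ p y)
    (hh : ∀ y, Y ≤ y → -(3 / y ^ 2) ≤ h y) (hh2 : ∀ y, Y ≤ y → -(3 / y ^ 2) ≤ h2 y)
    (hv : ∀ y, Y ≤ y → HasDerivAt v (p y * v y - v y ^ 2 + h y) y)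
    (hr : ∀ y, Y ≤ y → HasDerivAt r (-(r y) ^ 2 - (y / 2 - 4 * e / y) * r y + h2 y) y)
    (hvr : ∀ y, Y ≤ y → r y = v y - y / 2 - (1 - 4 * e) / y)
    (hL : ∀ y, Y ≤ y → HasDerivAt L (r y) y)
    (hbot : Tendsto L atTop atBot) :
    ∀ y, Y ≤ y → y ^ 3 * v y ≤ 24 := by
  intro y0 hy0
  by_contra hcon
  push Not at hcon
  -- derivative estimate
  have key : ∀ y, Y ≤ y → 24 ≤ y ^ 3 * v y → v y ≤ y / 4 →
      v y * y / 8 ≤ p y * v y - v y ^ 2 + h y := by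
    intro y hy h1 h2'
    have hy0 : 0 < y := by linarith
    have hvpos : 0 < v y := by
      by_contra hc
      push Not at hc
      have := mul_nonpos_of_nonneg_of_nonpos (by positivity : 0 ≤ y ^ 3) hc
      linarith
    have e1 : 3 / y ^ 2 ≤ v y * y / 8 := by
      rw [div_le_iff₀ (by positivity)]
      nlinarith
    have e2 := hh y hy
    have e3 := hp y hy
    nlinarith [mul_nonneg hvpos.le (sub_nonneg.2 e3), mul_nonneg hvpos.le (sub_nonneg.2 h2')]
  -- V stays above 24
  have hV : ∀ y, y0 ≤ y → -(y ^ 3 * v y) ≤ -24 := by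
    refine aux_barrier _ (fun y => -(3 * y ^ 2 * v y + y ^ 3 * (p y * v y - v y ^ 2 + h y)))
      y0 _ ?_ (by linarith) ?_
    · intro y hy
      have h1 := (((hasDerivAt_pow 3 y)).mul (hv y (by linarith))).neg
      refine h1.congr_deriv ?_
      norm_num
    · intro y hy h1
      have hyp : 16 ≤ y := by linarith
      have hVe : y ^ 3 * v y = 24 := by linarith
      have hvpos : 0 < v y := by
        by_contra hc
        push Not at hc
        have := mul_nonpos_of_nonneg_of_nonpos (by positivity : 0 ≤ y ^ 3) hc
        linarith
      have hy3 : (1:ℝ) ≤ y ^ 2 := by nlinarith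
      have hle : v y ≤ y / 4 := by
        have h3 : (16:ℝ) ^ 3 ≤ y ^ 3 := by gcongr
        nlinarith
      have := key y (by linarith) (by linarith) hle
      have h5 : 0 < p y * v y - v y ^ 2 + h y := lt_of_lt_of_le (by positivity) this
      have : 0 < 3 * y ^ 2 * v y + y ^ 3 * (p y * v y - v y ^ 2 + h y) := by positivity
      try simp only
      linarith
  have hvpos : ∀ y, y0 ≤ y → 0 < v y := by
    intro y hy
    by_contra hc
    push Not at hc
    have hyp : 16 ≤ y := by linarith
    have := mul_nonpos_of_nonneg_of_nonpos (by positivity : 0 ≤ y ^ 3) hc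
    linarith [hV y hy]
  -- v exceeds y / 4
  obtain ⟨y1, hy1, hvy1⟩ : ∃ y1, y0 ≤ y1 ∧ y1 / 4 < v y1 := by
    by_contra hc
    push Not at hc
    have hm := aux_mono (fun y => v y / y ^ 2)
      (fun y => ((p y * v y - v y ^ 2 + h y) * y ^ 2 - v y * (2 * y)) / (y ^ 2) ^ 2) y0 ?_ ?_
    · set c := v y0 / y0 ^ 2 with hcdef
      have hcpos : 0 < c := by
        have := hvpos y0 le_rfl
        have : 0 < y0 := by linarith
        positivity
      set y := max y0 (1 / c) with hydef
      have hyy : y0 ≤ y := le_max_left _ _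
      have h1 : c ≤ v y / y ^ 2 := hm (mem_Ici.2 le_rfl) (mem_Ici.2 hyy) hyy
      have hyp : 0 < y := by linarith
      rw [le_div_iff₀ (by positivity)] at h1
      have h2 := hc y hyy
      have h3 : 1 ≤ y * c := by
        have : 1 / c ≤ y := le_max_right _ _
        rwa [div_le_iff₀ hcpos] at this
      nlinarith
    · intro y hy
      have hyp : 0 < y := by linarith
      have h1 := (hv y (by linarith)).div (hasDerivAt_pow 2 y) (by positivity)
      refine h1.congr_deriv ?_
      norm_num
    · intro y hy
      have hyp : 16 ≤ y := by linarith
      have h1 := key y (by linarith) (by linarith [hV y hy]) (hc y hy)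
      have h2 := hvpos y hy
      apply div_nonneg _ (by positivity)
      have h3 : v y * y / 8 * y ^ 2 ≤ (p y * v y - v y ^ 2 + h y) * y ^ 2 := by gcongr
      have h4 : (0:ℝ) ≤ y ^ 2 - 16 := by nlinarith
      have : 0 ≤ (v y * y) * (y ^ 2 - 16) := by positivity
      nlinarith
  -- it stays above y / 4
  have hq : ∀ y, y1 ≤ y → y / 4 - v y ≤ 0 := by
    refine aux_barrier _ (fun y => 1 / 4 - (p y * v y - v y ^ 2 + h y)) y1 _ ?_ (by linarith) ?_
    · intro y hy
      exact ((hasDerivAt_id y).div_const 4).sub (hv y (by linarith))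
    · intro y hy h1
      have hyp : 16 ≤ y := by linarith
      have hve : v y = y / 4 := by linarith
      have e2 := hh y (by linarith)
      have e3 := hp y (by linarith)
      have e4 : 3 / y ^ 2 ≤ 3 := by
        apply div_le_self (by norm_num); nlinarith
      simp only [hve]
      nlinarith
  -- estimates on R
  have keyR : ∀ y, y1 ≤ y → 24 ≤ -(y ^ 3 * r y) →
      -(3 * y ^ 2 * r y + y ^ 3 * (-(r y) ^ 2 - (y / 2 - 4 * e / y) * r y + h2 y)) ≤ -24 := by
    intro y hy h1
    have hyp : 16 ≤ y := by linarith
    have hyp0 : 0 < y := by linarith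
    have hrn : r y < 0 := by
      by_contra hc
      push Not at hc
      have : 0 ≤ y ^ 3 * r y := by positivity
      linarith
    have e1 : 3 / y ^ 2 ≤ -r y * y / 8 := by
      rw [div_le_iff₀ (by positivity)]
      nlinarith
    have e2 := hh2 y (by linarith)
    have e3 : -(y / 4) - 1 / y ≤ r y := by
      rw [hvr y (by linarith)]
      have : (1 - 4 * e) / y ≤ 1 / y := by gcongr; linarith
      linarith [hq y hy]
    have e4 : 4 * e / y ≤ 2 / y := by gcongr; linarith
    have e5 : 1 / y ≤ 1 / 16 := by gcongr
    have e6 : 2 / y = 2 * (1 / y) := by ring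
    have e7 : y / 4 - 3 / 16 ≤ r y + y / 2 - 4 * e / y := by linarith
    have e8 : -r y * (y / 4 - 3 / 16) ≤ -r y * (r y + y / 2 - 4 * e / y) := by
      apply mul_le_mul_of_nonneg_left e7; linarith
    have e9 : -r y * (y / 8 - 3 / 16) ≤ -(r y) ^ 2 - (y / 2 - 4 * e / y) * r y + h2 y := by
      nlinarith
    have e10 : y ^ 3 * (-r y * (y / 8 - 3 / 16)) ≤
      y ^ 3 * (-(r y) ^ 2 - (y / 2 - 4 * e / y) * r y + h2 y) := by gcongr
    have e11 : -(3 * y ^ 2 * r y) ≤ 3 / 16 * -(y ^ 3 * r y) := by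
      have : 0 ≤ (y ^ 2 * -r y) * (y - 16) := by
        apply mul_nonneg (mul_nonneg (by positivity) (by linarith)) (by linarith)
      nlinarith
    have e12 : 0 ≤ (-(y ^ 3 * r y)) * (y / 8 - 2) :=
      mul_nonneg (by linarith) (by linarith)
    nlinarith
  have hRd : ∀ y, y1 ≤ y → HasDerivAt (fun y => -(y ^ 3 * r y))
      (-(3 * y ^ 2 * r y + y ^ 3 * (-(r y) ^ 2 - (y / 2 - 4 * e / y) * r y + h2 y))) y := by
    intro y hy
    have h1 := (((hasDerivAt_pow 3 y)).mul (hr y (by linarith))).neg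
    refine h1.congr_deriv ?_
    norm_num
  obtain ⟨y2, hy2, hRy2⟩ : ∃ y2, y1 ≤ y2 ∧ -(y2 ^ 3 * r y2) ≤ 24 := by
    by_contra hc
    push Not at hc
    have hm := aux_mono (fun y => -(-(y ^ 3 * r y)) - 24 * y) _ y1
      (fun y hy => (hRd y hy).neg.sub ((hasDerivAt_id y).const_mul 24)) ?_
    · set y := y1 + -(y1 ^ 3 * r y1) with hyd
      have h0 := hc y1 le_rfl
      have hyy : y1 ≤ y := by linarith
      have h1 := hm (mem_Ici.2 le_rfl) (mem_Ici.2 hyy) hyy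
      simp only at h1
      have h2 := hc y hyy
      linarith
    · intro y hy
      have := keyR y hy (hc y hy).le
      linarith
  have hR := aux_barrier _ _ y2 24 (fun y hy => hRd y (by linarith)) hRy2
    (fun y hy h => by have := keyR y (by linarith) (by linarith); linarith)
  have hm := aux_mono (fun y => L y - 12 / y ^ 2) (fun y => r y + 24 / y ^ 3) y2 ?_ ?_
  · obtain ⟨y, h1, h2⟩ := ((hbot.eventually_lt_atBot (L y2 - 12 / y2 ^ 2)).and
      (eventually_ge_atTop y2)).exists
    have h3 := hm (mem_Ici.2 le_rfl) (mem_Ici.2 h2) h2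
    simp only at h3
    have : 0 ≤ 12 / y ^ 2 := by positivity
    linarith
  · intro y hy
    have hyp : 0 < y := by linarith
    have h1 := (hL y (by linarith)).sub
      ((hasDerivAt_const y (12:ℝ)).div (hasDerivAt_pow 2 y) (by positivity))
    refine h1.congr_deriv ?_
    field_simp
    norm_num
    try ring
  · intro y hy
    have hyp : 0 < y := by linarith
    have h1 := hR y hy
    have h2 : r y + 24 / y ^ 3 = (y ^ 3 * r y + 24) / y ^ 3 := by field_simp
    rw [h2]
    apply div_nonneg _ (by positivity)
    linarith

/-- Lower bound for the Riccati variable `v`. -/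
theorem aux_lower (v p h : ℝ → ℝ) (Y : ℝ) (hY : 16 ≤ Y)
    (hp : ∀ y, Y ≤ y → y / 2 ≤ p y)
    (hh : ∀ y, Y ≤ y → h y ≤ 3 / y ^ 2)
    (hv : ∀ y, Y ≤ y → HasDerivAt v (p y * v y - v y ^ 2 + h y) y) :
    ∀ y, Y ≤ y → -24 ≤ y ^ 3 * v y := by
  intro y0 hy0
  by_contra hcon
  push Not at hcon
  have key : ∀ y, Y ≤ y → y ^ 3 * v y ≤ -24 →
      v y < 0 ∧ p y * v y - v y ^ 2 + h y ≤ - v y ^ 2 := by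
    intro y hy h1
    have hy0 : 0 < y := by linarith
    have hvn : v y < 0 := by
      by_contra hc
      push Not at hc
      have : 0 ≤ y ^ 3 * v y := by positivity
      linarith
    refine ⟨hvn, ?_⟩
    have e1 : 3 / y ^ 2 ≤ -v y * y / 8 := by
      rw [div_le_iff₀ (by positivity)]
      nlinarith
    have e2 := hh y hy
    have e3 := hp y hy
    nlinarith
  have hV : ∀ y, y0 ≤ y → y ^ 3 * v y ≤ -24 := by
    refine aux_barrier _ (fun y => (3 * y ^ 2 * v y + y ^ 3 * (p y * v y - v y ^ 2 + h y)))
      y0 _ ?_ (by linarith) ?_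
    · intro y hy
      have h1 := (((hasDerivAt_pow 3 y)).mul (hv y (by linarith)))
      refine h1.congr_deriv ?_
      norm_num
    · intro y hy h1
      have hyp : 16 ≤ y := by linarith
      obtain ⟨h2, h3⟩ := key y (by linarith) h1.le
      have h4 : p y * v y - v y ^ 2 + h y ≤ 0 := by nlinarith
      have h5 : y ^ 3 * (p y * v y - v y ^ 2 + h y) ≤ 0 :=
        mul_nonpos_of_nonneg_of_nonpos (by positivity) h4
      have h6 : 3 * y ^ 2 * v y < 0 := mul_neg_of_pos_of_neg (by positivity) h2
      try simp only
      linarith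
  have hm := aux_mono (fun y => (v y)⁻¹ - y)
    (fun y => -(p y * v y - v y ^ 2 + h y) / v y ^ 2 - 1) y0 ?_ ?_
  · have h0 := (key y0 hy0 (hV y0 le_rfl)).1
    have h0' : (v y0)⁻¹ < 0 := inv_lt_zero.2 h0
    set y := y0 - (v y0)⁻¹ with hyd
    have hyy : y0 ≤ y := by linarith
    have h1 := hm (mem_Ici.2 le_rfl) (mem_Ici.2 hyy) hyy
    simp only at h1
    have h2 := (key y (by linarith) (hV y hyy)).1
    have h2' : (v y)⁻¹ < 0 := inv_lt_zero.2 h2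
    linarith
  · intro y hy
    have h2 := (key y (by linarith) (hV y hy)).1
    exact ((hv y (by linarith)).inv h2.ne).sub (hasDerivAt_id y)
  · intro y hy
    obtain ⟨h2, h3⟩ := key y (by linarith) (hV y hy)
    have h4 : 0 < v y ^ 2 := by nlinarith
    rw [sub_nonneg, le_div_iff₀ h4]
    linarith

/-- A function with derivative `O(y⁻³)` converges. -/
theorem aux_conv (L v : ℝ → ℝ) (Y : ℝ) (hY : 16 ≤ Y)
    (hL : ∀ y, Y ≤ y → HasDerivAt L (v y) y)
    (h1 : ∀ y, Y ≤ y → y ^ 3 * v y ≤ 24) (h2 : ∀ y, Y ≤ y → -24 ≤ y ^ 3 * v y) :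
    ∃ l, Tendsto L atTop (𝓝 l) := by
  have hd : ∀ y, Y ≤ y → HasDerivAt (fun y : ℝ => 12 / y ^ 2) (-(24 / y ^ 3)) y := by
    intro y hy
    have hyp : 0 < y := by linarith
    have h1 := ((hasDerivAt_const y (12:ℝ)).div (hasDerivAt_pow 2 y) (by positivity))
    refine h1.congr_deriv ?_
    field_simp
    norm_num
    try ring
  have hm1 := aux_mono (fun y => L y - 12 / y ^ 2) _ Y (fun y hy => (hL y hy).sub (hd y hy)) (by
    intro y hy
    have hyp : 0 < y := by linarith
    have h3 : v y - -(24 / y ^ 3) = (y ^ 3 * v y + 24) / y ^ 3 := by field_simp; ring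
    rw [h3]
    exact div_nonneg (by linarith [h2 y hy]) (by positivity))
  have hm2 := aux_mono (fun y => -(L y + 12 / y ^ 2)) _ Y
    (fun y hy => ((hL y hy).add (hd y hy)).neg) (by
    intro y hy
    have hyp : 0 < y := by linarith
    have h3 : -(v y + -(24 / y ^ 3)) = (24 - y ^ 3 * v y) / y ^ 3 := by field_simp; ring
    rw [h3]
    exact div_nonneg (by linarith [h1 y hy]) (by positivity))
  have hmono : Monotone (fun y => L (max Y y) - 12 / (max Y y) ^ 2) := by
    intro a b hab
    exact hm1 (mem_Ici.2 (le_max_left _ _)) (mem_Ici.2 (le_max_left _ _)) (max_le_max le_rfl hab)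
  have hbdd : BddAbove (range (fun y => L (max Y y) - 12 / (max Y y) ^ 2)) := by
    refine ⟨L Y + 12 / Y ^ 2, ?_⟩
    rintro _ ⟨y, rfl⟩
    have h3 := hm2 (mem_Ici.2 le_rfl) (mem_Ici.2 (le_max_left Y y)) (le_max_left Y y)
    simp only at h3 ⊢
    have : 0 ≤ 12 / (max Y y) ^ 2 := by positivity
    linarith
  have ht := tendsto_atTop_ciSup hmono hbdd
  set l := ⨆ y, (L (max Y y) - 12 / (max Y y) ^ 2) with hl
  refine ⟨l + 0, ?_⟩
  have h0 : Tendsto (fun y : ℝ => 12 / y ^ 2) atTop (𝓝 0) :=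
    tendsto_const_nhds.div_atTop (tendsto_pow_atTop (by norm_num))
  refine (ht.add h0).congr' ?_
  filter_upwards [eventually_ge_atTop Y] with y hy
  rw [max_eq_right hy]
  ring

/-- The main Riccati argument. -/
theorem aux_main (e Y : ℝ) (L g q : ℝ → ℝ) (hY : 16 ≤ Y) (he0 : 0 < e) (he1 : e ≤ 1 / 3)
    (hq0 : ∀ y, Y ≤ y → 0 ≤ q y) (hq1 : ∀ y, Y ≤ y → q y ≤ 1 / y ^ 2)
    (hL : ∀ y, Y ≤ y → HasDerivAt L (g y) y)
    (hg : ∀ y, Y ≤ y → HasDerivAt g (-(g y) ^ 2 - y / 2 * g y - e + q y) y)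
    (hbot : Tendsto (fun y => L y + 2 * e * Real.log y) atTop atBot) :
    ∃ l, Tendsto (fun y => L y + y ^ 2 / 4 + (1 - 2 * e) * Real.log y) atTop (𝓝 l) := by
  have hv : ∀ y, Y ≤ y → HasDerivAt (fun y => g y + y / 2 + (1 - 2 * e) / y)
      ((y / 2 + 2 * (1 - 2 * e) / y) * (g y + y / 2 + (1 - 2 * e) / y)
        - (g y + y / 2 + (1 - 2 * e) / y) ^ 2
        + (q y - (1 - 2 * e) * (2 - 2 * e) / y ^ 2)) y := by
    intro y hy
    have hyp : y ≠ 0 := by linarith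
    have h1 := ((hg y hy).add ((hasDerivAt_id y).div_const 2)).add
      ((hasDerivAt_const y (1 - 2 * e)).div (hasDerivAt_id y) hyp)
    refine h1.congr_deriv ?_
    try simp only [id]
    field_simp
    ring
  have hp : ∀ y, Y ≤ y → y / 2 ≤ y / 2 + 2 * (1 - 2 * e) / y := by
    intro y hy
    have hyp : 0 < y := by linarith
    have : 0 ≤ 2 * (1 - 2 * e) / y := div_nonneg (by linarith) hyp.le
    linarith
  have hup := aux_upper _ (fun y => y / 2 + 2 * (1 - 2 * e) / y)
    (fun y => (q y - (1 - 2 * e) * (2 - 2 * e) / y ^ 2))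
    (fun y => g y + 2 * e / y) (fun y => q y - (4 * e ^ 2 + 2 * e) / y ^ 2)
    (fun y => L y + 2 * e * Real.log y) e Y hY he0 he1 hp ?_ ?_ hv ?_ ?_ ?_ hbot
  · have hlo := aux_lower _ (fun y => y / 2 + 2 * (1 - 2 * e) / y)
      (fun y => (q y - (1 - 2 * e) * (2 - 2 * e) / y ^ 2)) Y hY hp ?_ hv
    · refine aux_conv _ _ Y hY ?_ hup hlo
      intro y hy
      have hyp : y ≠ 0 := by linarith
      have h1 := ((hL y hy).add ((hasDerivAt_pow 2 y).div_const 4)).add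
        ((Real.hasDerivAt_log hyp).const_mul (1 - 2 * e))
      refine h1.congr_deriv ?_
      field_simp
      norm_num
      try ring
    · intro y hy
      have hyp : 0 < y := by linarith
      have h1 := hq1 y hy
      have h2 : 0 ≤ (1 - 2 * e) * (2 - 2 * e) / y ^ 2 :=
        div_nonneg (mul_nonneg (by linarith) (by linarith)) (by positivity)
      have h3 : 1 / y ^ 2 ≤ 3 / y ^ 2 := by gcongr; norm_num
      try simp only
      linarith
  · intro y hy
    have hyp : 0 < y := by linarith
    have h1 := hq0 y hy
    have h2 : (1 - 2 * e) * (2 - 2 * e) / y ^ 2 ≤ 3 / y ^ 2 := by gcongr; nlinarith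
    try simp only
    linarith
  · intro y hy
    have hyp : 0 < y := by linarith
    have h1 := hq0 y hy
    have h2 : (4 * e ^ 2 + 2 * e) / y ^ 2 ≤ 3 / y ^ 2 := by gcongr; nlinarith
    try simp only
    linarith
  · intro y hy
    have hyp : y ≠ 0 := by linarith
    have h1 := (hg y hy).add ((hasDerivAt_const y (2 * e)).div (hasDerivAt_id y) hyp)
    refine h1.congr_deriv ?_
    try simp only [id]
    field_simp
    ring
  · intro y hy
    have hyp : y ≠ 0 := by linarith
    try simp only
    field_simp
    ring
  · intro y hy
    have hyp : y ≠ 0 := by linarith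
    have h1 := (hL y hy).add ((Real.hasDerivAt_log hyp).const_mul (2 * e))
    refine h1.congr_deriv ?_
    rw [div_eq_mul_inv]

theorem aux_mu1 (y : ℝ) (hy : 0 ≤ y) : 0 ≤ mu1 y ∧ mu1 y ≤ 1 := by
  have hpi : 0 < Real.sqrt Real.pi := Real.sqrt_pos.2 Real.pi_pos
  unfold mu1
  constructor
  · apply mul_nonneg (by positivity)
    apply intervalIntegral.integral_nonneg (by linarith)
    intro x _
    positivity
  · have h1 := integral_gaussian_Ioi 1
    have hi : MeasureTheory.Integrable (fun x : ℝ => Real.exp (-1 * x ^ 2)) :=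
      integrable_exp_neg_mul_sq one_pos
    have h2 : ∫ σ in (0:ℝ)..(y / 2), Real.exp (-σ ^ 2) ≤ Real.sqrt Real.pi / 2 := by
      rw [intervalIntegral.integral_of_le (by linarith)]
      simp only [neg_mul, one_mul, div_one] at h1 hi
      rw [← h1]
      apply MeasureTheory.setIntegral_mono_set hi.integrableOn
      · filter_upwards with x
        positivity
      · exact Filter.Eventually.of_forall (fun x hx => hx.1)
    calc 2 / Real.sqrt Real.pi * _ ≤ 2 / Real.sqrt Real.pi * (Real.sqrt Real.pi / 2) := by gcongr
      _ = 1 := by field_simp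

/-- Gaussian decay of the diffusive profile at infinity: there is C > 0 with
e^{y²/4} y^{1−2ε} μ₂(y) → C as y → ∞. -/
theorem diffusive_profile_gaussian_decay (n : ℕ) (hn : 4 ≤ n)
    (μ : ℝ → ℝ) (hμ : IsDiffusiveProfile n μ) :
    ∃ C : ℝ, 0 < C ∧
      Filter.Tendsto (fun y : ℝ => Real.exp (y ^ 2 / 4) * y ^ (1 - 2 * eps n) * μ y)
        Filter.atTop (nhds C) := by
  obtain ⟨hC, hpos, hode, -, hinf⟩ := hμ
  have hn4 : (4:ℝ) ≤ n := by exact_mod_cast hn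
  have he0 : 0 < eps n := by unfold eps; apply one_div_pos.2; linarith
  have he1 : eps n ≤ 1 / 3 := by
    unfold eps
    exact one_div_le_one_div_of_le (by norm_num) (by linarith)
  have hd1 : ∀ y, 0 < y → HasDerivAt μ (deriv μ y) y := by
    intro y hy
    exact ((hC.contDiffAt (Ioi_mem_nhds hy)).differentiableAt (by norm_num)).hasDerivAt
  have hd2 : ∀ y, 0 < y → HasDerivAt (deriv μ) (deriv (deriv μ) y) y := by
    intro y hy
    have h1 : ContDiffOn ℝ 1 (deriv μ) (Ioi 0) :=
      hC.deriv_of_isOpen isOpen_Ioi (by norm_num)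
    exact ((h1.contDiffAt (Ioi_mem_nhds hy)).differentiableAt (by norm_num)).hasDerivAt
  -- bound on q
  have hqev : ∀ᶠ y in atTop, (2 * mu1 y) ^ n * μ y ^ (n - 1) ≤ 1 / y ^ 2 := by
    have h1 : Tendsto (fun y : ℝ => 2 ^ n * (y ^ (2 * eps n) * μ y) ^ (n - 1)) atTop (𝓝 0) := by
      have := (hinf.pow (n - 1)).const_mul (2 ^ n)
      rwa [zero_pow (by omega), mul_zero] at this
    filter_upwards [h1.eventually_lt_const (zero_lt_one), eventually_gt_atTop 0] with y h2 hy
    have h3 : (y ^ (2 * eps n)) ^ (n - 1) = y ^ 2 := by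
      rw [← Real.rpow_mul_natCast hy.le, ← Real.rpow_natCast y 2]
      congr 1
      rw [Nat.cast_sub (by omega)]
      unfold eps
      have : (n:ℝ) - 1 ≠ 0 := by linarith
      push_cast
      field_simp
    rw [mul_pow, h3] at h2
    rw [le_div_iff₀ (by positivity)]
    have h4 := aux_mu1 y hy.le
    have h5 : (2 * mu1 y) ^ n ≤ 2 ^ n :=
      pow_le_pow_left₀ (by linarith [h4.1]) (by linarith [h4.2]) n
    have h6 : 0 ≤ μ y ^ (n - 1) * y ^ 2 := mul_nonneg (pow_nonneg (hpos y hy).le _) (by positivity)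
    nlinarith [mul_le_mul_of_nonneg_right h5 h6]
  obtain ⟨Y0, hY0⟩ := eventually_atTop.1 hqev
  set Y := max Y0 16 with hYd
  have hY : 16 ≤ Y := le_max_right _ _
  have hex := aux_main (eps n) Y (fun y => Real.log (μ y)) (fun y => deriv μ y / μ y)
    (fun y => (2 * mu1 y) ^ n * μ y ^ (n - 1)) hY he0 he1 ?_ ?_ ?_ ?_ ?_
  · obtain ⟨l, hl⟩ := hex
    refine ⟨Real.exp l, Real.exp_pos l, ?_⟩
    refine ((Real.continuous_exp.tendsto l).comp hl).congr' ?_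
    filter_upwards [eventually_gt_atTop 0] with y hy
    simp only [Function.comp]
    rw [Real.exp_add, Real.exp_add, Real.exp_log (hpos y hy), Real.rpow_def_of_pos hy]
    rw [mul_comm (Real.log y)]
    ring
  · intro y hy
    have hy0 : 0 < y := by linarith
    exact mul_nonneg (pow_nonneg (by linarith [(aux_mu1 y hy0.le).1]) _)
      (pow_nonneg (hpos y hy0).le _)
  · intro y hy
    exact hY0 y (le_trans (le_max_left _ _) hy)
  · intro y hy
    have hy0 : 0 < y := by linarith
    exact (hd1 y hy0).log (hpos y hy0).ne'
  · intro y hy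
    have hy0 : 0 < y := by linarith
    have hm := (hpos y hy0).ne'
    have h1 := (hd2 y hy0).div (hd1 y hy0) hm
    refine h1.congr_deriv ?_
    have h2 := hode y hy0
    have h3 : deriv (deriv μ) y = (2 * mu1 y) ^ n * μ y ^ (n - 1) * μ y
        - y / 2 * deriv μ y - eps n * μ y := by
      rw [mul_pow] at h2
      have : μ y ^ n = μ y ^ (n - 1) * μ y := by
        rw [← pow_succ]; congr 1; omega
      rw [this] at h2
      linarith
    rw [h3]
    field_simp
    ring
  · have h1 : Tendsto (fun y : ℝ => Real.log (y ^ (2 * eps n) * μ y)) atTop atBot := by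
      refine Real.tendsto_log_nhdsGT_zero.comp ?_
      refine tendsto_nhdsWithin_iff.2 ⟨hinf, ?_⟩
      filter_upwards [eventually_gt_atTop 0] with y hy
      exact mul_pos (Real.rpow_pos_of_pos hy _) (hpos y hy)
    refine h1.congr' ?_
    filter_upwards [eventually_gt_atTop 0] with y hy
    rw [Real.log_mul (Real.rpow_pos_of_pos hy _).ne' (hpos y hy).ne', Real.log_rpow hy]
    ring
end

section
/- For every integer n ≥ 4 there exists a unique function h : [0,∞) → ℝ that is twice continuously differentiable and satisfies h''(z) + γ η(z) + α z η'(z) = n (2κ z η(z) + η(z)²)^{n−1} ((2κ z + 2η(z)) h(z) + 2κ₃ z³ η(z)) for all z ≥ 0, h'(0) = 0, and h(z) − λ₀ z^{2−δ} → 0 as z → ∞. -/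
noncomputable def gam (n : ℕ) : ℝ := 1 / (2 * (n : ℝ) + 1)

noncomputable def alph (n : ℕ) : ℝ := 1 / 2 - gam n

def IsReactiveProfile (n : ℕ) (η : ℝ → ℝ) : Prop :=
  ContDiffOn ℝ 2 η (Set.Ici 0) ∧
  (∀ z ∈ Set.Ici (0:ℝ), 0 < η z) ∧
  (∀ z ∈ Set.Ici (0:ℝ),
    derivWithin (derivWithin η (Set.Ici 0)) (Set.Ici 0) z
      = (2 * kap * z * η z + (η z) ^ 2) ^ n) ∧
  derivWithin η (Set.Ici 0) 0 = -kap ∧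
  Filter.Tendsto η Filter.atTop (nhds 0)

/-- The corrector h: C² on [0,∞), satisfies
h'' + γη + αzη' = n(2κzη+η²)^{n−1}((2κz+2η)h + 2κ₃z³η), h'(0) = 0,
h(z) − λ₀ z^{2−δ} → 0 as z → ∞. -/
def IsCorrector (n : ℕ) (η h : ℝ → ℝ) : Prop :=
  ContDiffOn ℝ 2 h (Set.Ici 0) ∧
  (∀ z ∈ Set.Ici (0:ℝ),
    derivWithin (derivWithin h (Set.Ici 0)) (Set.Ici 0) z + gam n * η z
        + alph n * z * derivWithin η (Set.Ici 0) z
      = (n : ℝ) * (2 * kap * z * η z + (η z) ^ 2) ^ (n - 1)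
          * ((2 * kap * z + 2 * η z) * h z + 2 * kap3 * z ^ 3 * η z)) ∧
  derivWithin h (Set.Ici 0) 0 = 0 ∧
  Filter.Tendsto (fun z : ℝ => h z - lam0 n * z ^ (2 - del n)) Filter.atTop (nhds 0)

open Filter Topology Set

/-- kernel estimate for the weighted contraction -/
theorem aux_kernel_bound (k : ℝ) (hk : 0 < k) (m : ℝ) (hm : 0 ≤ m) (φ : ℝ → ℝ)
    (D : ℝ) (hD : 0 ≤ D) (hφ : ∀ s ∈ Icc 0 m, |φ s| ≤ D * Real.exp (k * s)) :
    |∫ s in (0:ℝ)..m, (m - s) * φ s| ≤ D / k ^ 2 * Real.exp (k * m) := by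
  have h1 : ‖∫ s in (0:ℝ)..m, (m - s) * φ s‖ ≤
      ∫ s in (0:ℝ)..m, D * ((m - s) * Real.exp (k * s)) := by
    apply intervalIntegral.norm_integral_le_of_norm_le hm
    · filter_upwards with s hs
      rw [norm_mul, Real.norm_eq_abs, Real.norm_eq_abs, abs_of_nonneg (by linarith [hs.2])]
      have := hφ s ⟨hs.1.le, hs.2⟩
      nlinarith [mul_le_mul_of_nonneg_left this (by linarith [hs.2] : 0 ≤ m - s)]
    · apply Continuous.intervalIntegrable
      fun_prop
  have h2 : ∫ s in (0:ℝ)..m, D * ((m - s) * Real.exp (k * s)) =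
      D * ((m - m) / k * Real.exp (k * m) + Real.exp (k * m) / k ^ 2) -
      D * ((m - 0) / k * Real.exp (k * 0) + Real.exp (k * 0) / k ^ 2) := by
    apply intervalIntegral.integral_eq_sub_of_hasDerivAt
      (f := fun s => D * ((m - s) / k * Real.exp (k * s) + Real.exp (k * s) / k ^ 2))
    · intro s _
      have he : HasDerivAt (fun s => Real.exp (k * s)) (Real.exp (k * s) * k) s := by
        simpa using ((hasDerivAt_id s).const_mul k).exp
      have hl : HasDerivAt (fun s => (m - s) / k) (-1 / k) s := by
        simpa using ((hasDerivAt_id s).const_sub m).div_const k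
      have := ((hl.mul he).add (he.div_const (k ^ 2))).const_mul D
      refine this.congr_deriv ?_
      field_simp
      ring
    · apply Continuous.intervalIntegrable
      fun_prop
  rw [Real.norm_eq_abs] at h1
  refine h1.trans ?_
  rw [h2]
  have h3 : 0 ≤ D * ((m - 0) / k * Real.exp (k * 0) + Real.exp (k * 0) / k ^ 2) := by
    rw [sub_zero]; positivity
  have h4 : D * ((m - m) / k * Real.exp (k * m) + Real.exp (k * m) / k ^ 2) =
      D / k ^ 2 * Real.exp (k * m) := by
    simp; ring
  linarith

theorem aux_kernel_hasDerivAt (φ : ℝ → ℝ) (hφ : Continuous φ) (z : ℝ) :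
    HasDerivAt (fun z => ∫ s in (0:ℝ)..z, (z - s) * φ s) (∫ s in (0:ℝ)..z, φ s) z := by
  have e : (fun z => ∫ s in (0:ℝ)..z, (z - s) * φ s) =
      fun z => z * (∫ s in (0:ℝ)..z, φ s) - ∫ s in (0:ℝ)..z, s * φ s := by
    funext z
    rw [← intervalIntegral.integral_const_mul, ← intervalIntegral.integral_sub]
    · congr 1; funext s; ring
    · apply Continuous.intervalIntegrable; fun_prop
    · apply Continuous.intervalIntegrable; fun_prop
  rw [e]
  have h1 : HasDerivAt (fun z => ∫ s in (0:ℝ)..z, φ s) (φ z) z :=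
    hφ.integral_hasStrictDerivAt 0 z |>.hasDerivAt
  have h2 : HasDerivAt (fun z => ∫ s in (0:ℝ)..z, s * φ s) (z * φ z) z :=
    ((continuous_id.mul hφ).integral_hasStrictDerivAt 0 z).hasDerivAt
  have := ((hasDerivAt_id z).mul h1).sub h2
  refine this.congr_deriv ?_
  simp

/-- zero-data initial value problem, via a weighted contraction -/
theorem aux_ivp_zero (q g : ℝ → ℝ) (hq : Continuous q) (hg : Continuous g) (L C : ℝ)
    (hL : 1 ≤ L) (hqL : ∀ z, |q z| ≤ L) (hC : 0 ≤ C)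
    (hgC : ∀ z, 0 ≤ z → |g z| ≤ C * Real.exp (2 * L * z)) :
    ∃ v v1 φ : ℝ → ℝ, (∀ z, HasDerivAt v (v1 z) z) ∧ (∀ z, HasDerivAt v1 (φ z) z) ∧
      Continuous φ ∧ (∀ z, 0 ≤ z → φ z = q z * v z + g z) ∧ v 0 = 0 ∧ v1 0 = 0 := by
  set k := 2 * L with hk
  have hk0 : 0 < k := by linarith
  let Φ : BoundedContinuousFunction ℝ ℝ → ℝ → ℝ := fun u s => q s * (Real.exp (k * s) * u s) + g s
  have hΦc : ∀ u, Continuous (Φ u) := fun u => by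
    have := u.continuous
    fun_prop
  have hcont : ∀ u, Continuous (fun z => ∫ s in (0:ℝ)..z, (z - s) * Φ u s) := fun u =>
    continuous_iff_continuousAt.2 fun z => (aux_kernel_hasDerivAt _ (hΦc u) z).continuousAt
  let Tf : BoundedContinuousFunction ℝ ℝ → ℝ → ℝ := fun u z =>
    Real.exp (-(k * max z 0)) * ∫ s in (0:ℝ)..(max z 0), (max z 0 - s) * Φ u s
  have hTc : ∀ u, Continuous (Tf u) := fun u => by
    apply Continuous.mul
    · fun_prop
    · exact (hcont u).comp (continuous_id.max continuous_const)
  have hTb : ∀ u z, ‖Tf u z‖ ≤ (L * ‖u‖ + C) / k ^ 2 := by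
    intro u z
    have hm : 0 ≤ max z 0 := le_max_right _ _
    have := aux_kernel_bound k hk0 (max z 0) hm (Φ u) (L * ‖u‖ + C) (by positivity) (by
      intro s hs
      have h1 := hgC s hs.1
      have h2 := u.norm_coe_le_norm s
      rw [Real.norm_eq_abs] at h2
      calc |Φ u s| ≤ |q s * (Real.exp (k * s) * u s)| + |g s| := abs_add_le _ _
        _ = |q s| * (Real.exp (k * s) * |u s|) + |g s| := by
            rw [abs_mul, abs_mul, Real.abs_exp]
        _ ≤ L * (Real.exp (k * s) * ‖u‖) + C * Real.exp (k * s) := by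
            gcongr
            exact hqL s
        _ = _ := by ring)
    simp only [Tf, norm_mul, Real.norm_eq_abs, Real.abs_exp]
    calc _ ≤ Real.exp (-(k * max z 0)) * ((L * ‖u‖ + C) / k ^ 2 * Real.exp (k * max z 0)) := by
          gcongr
      _ = (L * ‖u‖ + C) / k ^ 2 * (Real.exp (-(k * max z 0)) * Real.exp (k * max z 0)) := by ring
      _ = _ := by rw [← Real.exp_add]; simp
  let T : BoundedContinuousFunction ℝ ℝ → BoundedContinuousFunction ℝ ℝ := fun u =>
    BoundedContinuousFunction.ofNormedAddCommGroup (Tf u) (hTc u) _ (hTb u)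
  have hTlip : ∀ u w, dist (T u) (T w) ≤ (1/2 : NNReal) * dist u w := by
    intro u w
    rw [BoundedContinuousFunction.dist_le (by positivity)]
    intro z
    have hm : 0 ≤ max z 0 := le_max_right _ _
    have e : Tf u z - Tf w z = Real.exp (-(k * max z 0)) *
        ∫ s in (0:ℝ)..(max z 0), (max z 0 - s) * (Φ u s - Φ w s) := by
      simp only [Tf]
      rw [← mul_sub, ← intervalIntegral.integral_sub]
      · congr 2; funext s; ring
      · apply Continuous.intervalIntegrable
        exact (continuous_const.sub continuous_id).mul (hΦc u)
      · apply Continuous.intervalIntegrable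
        exact (continuous_const.sub continuous_id).mul (hΦc w)
    have := aux_kernel_bound k hk0 (max z 0) hm (fun s => Φ u s - Φ w s) (L * dist u w)
      (by positivity) (by
      intro s hs
      have h2 := BoundedContinuousFunction.dist_coe_le_dist (f := u) (g := w) s
      rw [Real.dist_eq] at h2
      have e2 : Φ u s - Φ w s = q s * (Real.exp (k * s) * (u s - w s)) := by
        simp only [Φ]; ring
      rw [e2, abs_mul, abs_mul, Real.abs_exp]
      calc |q s| * (Real.exp (k * s) * |u s - w s|) ≤ L * (Real.exp (k * s) * dist u w) := by
            gcongr
            exact hqL s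
        _ = _ := by ring)
    change dist (Tf u z) (Tf w z) ≤ _
    rw [Real.dist_eq, e, abs_mul, Real.abs_exp]
    calc _ ≤ Real.exp (-(k * max z 0)) * ((L * dist u w) / k ^ 2 * Real.exp (k * max z 0)) := by
          gcongr
      _ = (L * dist u w) / k ^ 2 * (Real.exp (-(k * max z 0)) * Real.exp (k * max z 0)) := by ring
      _ = L / k ^ 2 * dist u w := by rw [← Real.exp_add]; simp; ring
      _ ≤ _ := by
          gcongr
          rw [div_le_iff₀ (by positivity), hk]
          push_cast
          nlinarith
  have hcon : ContractingWith (1/2 : NNReal) T :=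
    ⟨by rw [← NNReal.coe_lt_coe]; push_cast; norm_num, LipschitzWith.of_dist_le_mul hTlip⟩
  let u := ContractingWith.fixedPoint T hcon
  have hu : T u = u := hcon.fixedPoint_isFixedPt
  refine ⟨fun z => ∫ s in (0:ℝ)..z, (z - s) * Φ u s, fun z => ∫ s in (0:ℝ)..z, Φ u s, Φ u,
    aux_kernel_hasDerivAt _ (hΦc u), fun z => ((hΦc u).integral_hasStrictDerivAt 0 z).hasDerivAt,
    hΦc u, ?_, by simp, by simp⟩
  intro z hz
  have h1 : u z = Tf u z := by
    conv_lhs => rw [← hu]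
    rfl
  simp only [Tf, max_eq_left hz] at h1
  have h2 : Real.exp (k * z) * u z = ∫ s in (0:ℝ)..z, (z - s) * Φ u s := by
    rw [h1, ← mul_assoc, ← Real.exp_add]; simp
  change q z * (Real.exp (k * z) * u z) + g z = _
  rw [h2]

/-- initial value problem for a linear second order equation -/
theorem aux_ivp (q g : ℝ → ℝ) (hq : Continuous q) (hg : Continuous g) (L C : ℝ)
    (hqL : ∀ z, |q z| ≤ L) (hgC : ∀ z, |g z| ≤ C) (a b : ℝ) :
    ∃ v v1 φ : ℝ → ℝ, (∀ z, HasDerivAt v (v1 z) z) ∧ (∀ z, HasDerivAt v1 (φ z) z) ∧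
      Continuous φ ∧ (∀ z, 0 ≤ z → φ z = q z * v z + g z) ∧ v 0 = a ∧ v1 0 = b := by
  have hC : 0 ≤ C := (abs_nonneg _).trans (hgC 0)
  have hL : 0 ≤ L := (abs_nonneg _).trans (hqL 0)
  obtain ⟨v, v1, φ, h1, h2, h3, h4, h5, h6⟩ := aux_ivp_zero q (fun z => q z * (a + b * z) + g z)
    hq (by fun_prop) (L + 1) (L * (|a| + |b|) + C) (by linarith) (fun z => (hqL z).trans (by linarith))
    (by positivity) (by
      intro z hz
      have e1 : 1 ≤ Real.exp (2 * (L + 1) * z) := Real.one_le_exp (by positivity)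
      have e2 : z ≤ Real.exp (2 * (L + 1) * z) := by
        have := Real.add_one_le_exp (2 * (L + 1) * z)
        nlinarith [mul_nonneg hL hz]
      calc |q z * (a + b * z) + g z| ≤ |q z| * (|a| + |b| * z) + |g z| := by
            refine (abs_add_le _ _).trans ?_
            rw [abs_mul]
            gcongr
            refine (abs_add_le _ _).trans ?_
            rw [abs_mul, abs_of_nonneg hz]
        _ ≤ L * (|a| * Real.exp (2 * (L + 1) * z) + |b| * Real.exp (2 * (L + 1) * z))
            + C * Real.exp (2 * (L + 1) * z) := by
            gcongr
            · exact hqL z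
            · exact le_mul_of_one_le_right (abs_nonneg _) e1
            · exact (hgC z).trans (le_mul_of_one_le_right hC e1)
        _ = _ := by ring)
  refine ⟨fun z => v z + (a + b * z), fun z => v1 z + b, φ, ?_, ?_, h3, ?_, by simp [h5], by simp [h6]⟩
  · intro z
    have := (h1 z).add (((hasDerivAt_id z).const_mul b).const_add a)
    exact this.congr_deriv (by simp)
  · intro z
    simpa using (h2 z).add_const b
  · intro z hz
    rw [h4 z hz]; ring

/-- a function whose second derivative is negative below the level `l` stays above it -/
theorem aux_min (d d1 d2 : ℝ → ℝ) (A R l : ℝ) (hc : ContinuousOn d (Icc A R))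
    (h1 : ∀ z ∈ Ioo A R, HasDerivAt d (d1 z) z) (h2 : ∀ z ∈ Ioo A R, HasDerivAt d1 (d2 z) z)
    (hneg : ∀ z ∈ Ioo A R, d z < l → d2 z < 0)
    (hA : d A < l → ¬ IsMinOn d (Icc A R) A) (hR : l ≤ d R) :
    ∀ z ∈ Icc A R, l ≤ d z := by
  intro z0 hz0
  by_contra hlt
  push Not at hlt
  obtain ⟨z1, hz1, hmin⟩ := isCompact_Icc.exists_isMinOn ⟨z0, hz0⟩ hc
  have hz1l : d z1 < l := lt_of_le_of_lt (hmin hz0) hlt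
  have hneA : z1 ≠ A := by
    rintro rfl
    exact hA hz1l hmin
  have hneR : z1 ≠ R := by
    rintro rfl
    linarith
  have hz : z1 ∈ Ioo A R := ⟨lt_of_le_of_ne hz1.1 hneA.symm, lt_of_le_of_ne hz1.2 hneR⟩
  have hnhds : Ioo A R ∈ 𝓝 z1 := Ioo_mem_nhds hz.1 hz.2
  have hlm : IsLocalMin d z1 := hmin.isLocalMin (Icc_mem_nhds hz.1 hz.2)
  have hd1 : deriv d =ᶠ[𝓝 z1] d1 := by
    filter_upwards [hnhds] with z hz using (h1 z hz).deriv
  have hdd : deriv (deriv d) z1 = d2 z1 := by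
    rw [hd1.deriv_eq]; exact (h2 z1 hz).deriv
  have hlM : IsLocalMax d z1 := isLocalMax_of_deriv_deriv_neg
    (by rw [hdd]; exact hneg z1 hz hz1l) hlm.deriv_eq_zero (h1 z1 hz).continuousAt
  have hconst : d =ᶠ[𝓝 z1] fun _ => d z1 := by
    filter_upwards [hlm, hlM] with z ha hb using le_antisymm hb ha
  have : deriv (deriv d) z1 = 0 := by
    have e := hconst.deriv
    rw [e.deriv_eq]
    simp
  have := hneg z1 hz hz1l
  linarith

theorem aux_not_min (d : ℝ → ℝ) (A R m : ℝ) (hAR : A < R) (h : HasDerivAt d m A) (hm : m < 0) :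
    ¬ IsMinOn d (Icc A R) A := by
  intro hmin
  have h1 := h.hasDerivWithinAt (s := Ioi A)
  rw [hasDerivWithinAt_iff_tendsto_slope' (by simp)] at h1
  have h2 : 0 ≤ m := by
    refine ge_of_tendsto h1 ?_
    filter_upwards [Ioo_mem_nhdsGT hAR] with z hz
    rw [slope_def_field]
    have := hmin (show z ∈ Icc A R from ⟨hz.1.le, hz.2.le⟩)
    simp only [mem_ofPred_eq] at this
    exact div_nonneg (by linarith) (by linarith [hz.1])
  linarith

/-- two-sided comparison for `v'' = q v + g` on `[A,R]` -/
theorem aux_compare (q g v v1 v2 B B1 B2 : ℝ → ℝ) (A R : ℝ) (hA0 : 0 ≤ A)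
    (hq : ∀ z, 0 < q z)
    (h1 : ∀ z, HasDerivAt v (v1 z) z) (h2 : ∀ z, HasDerivAt v1 (v2 z) z)
    (hv : ∀ z, 0 ≤ z → v2 z = q z * v z + g z)
    (hB1 : ∀ z, A ≤ z → HasDerivAt B (B1 z) z) (hB2 : ∀ z, A ≤ z → HasDerivAt B1 (B2 z) z)
    (hB : ∀ z ∈ Ioo A R, B2 z + |g z| ≤ q z * B z)
    (hA : |v A| ≤ B A ∨ |v1 A| < - B1 A) (hAR : A < R) (hR : |v R| ≤ B R) :
    ∀ z ∈ Icc A R, |v z| ≤ B z := by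
  have key : ∀ σ : ℝ, |σ| = 1 → ∀ z ∈ Icc A R, 0 ≤ B z - σ * v z := by
    intro σ hσ
    have hle : ∀ x : ℝ, σ * x ≤ |x| := fun x => by
      refine (le_abs_self _).trans ?_
      rw [abs_mul, hσ, one_mul]
    have hle' : ∀ x : ℝ, -(σ * x) ≤ |x| := fun x => by
      refine (neg_le_abs _).trans ?_
      rw [abs_mul, hσ, one_mul]
    have hd : ∀ z, A ≤ z → HasDerivAt (fun z => B z - σ * v z) (B1 z - σ * v1 z) z :=
      fun z hz => (hB1 z hz).sub ((h1 z).const_mul σ)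
    apply aux_min (fun z => B z - σ * v z) (fun z => B1 z - σ * v1 z) (fun z => B2 z - σ * v2 z)
    · exact fun z hz => (hd z hz.1).continuousAt.continuousWithinAt
    · exact fun z hz => hd z hz.1.le
    · exact fun z hz => (hB2 z hz.1.le).sub ((h2 z).const_mul σ)
    · intro z hz hlt
      rw [hv z (hA0.trans hz.1.le)]
      have := hB z hz
      have := hle' (g z)
      nlinarith [mul_neg_of_pos_of_neg (hq z) hlt]
    · intro hlt
      rcases hA with hA | hA
      · have := hle (v A)
        linarith
      · refine aux_not_min _ A R _ hAR (hd A le_rfl) ?_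
        have := hle' (v1 A)
        linarith
    · have := hle (v R)
      linarith
  intro z hz
  rw [abs_le]
  have a1 := key 1 (by simp) z hz
  have a2 := key (-1) (by simp) z hz
  constructor <;> linarith

theorem aux_barrier_const (q g : ℝ → ℝ) (hq : Continuous q) (hg : Continuous g)
    (hqpos : ∀ z, 0 < q z) (c : ℝ) (hc : 0 < c) (hqc : ∀ᶠ z in atTop, c ≤ q z * z ^ 2)
    (hg0 : Tendsto (fun z => z ^ 2 * g z) atTop (𝓝 0)) (k : ℝ) (hk : 0 ≤ k) :
    ∃ M : ℝ, 0 ≤ M ∧ ∀ z, 0 ≤ z → |g z| + k * Real.exp (-z) ≤ q z * M := by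
  have e1 : ∀ᶠ z : ℝ in atTop, |z ^ 2 * g z| ≤ 1 := by
    have := hg0.abs
    rw [abs_zero] at this
    exact this.eventually_le_const (by norm_num)
  obtain ⟨Z, hZ⟩ := eventually_atTop.1 ((hqc.and e1).and (eventually_ge_atTop 1))
  have hcont : ContinuousOn (fun z => (|g z| + k * Real.exp (-z)) / q z) (Icc 0 Z) := by
    apply Continuous.continuousOn
    apply Continuous.div _ hq (fun z => (hqpos z).ne')
    fun_prop
  obtain ⟨M2, hM2⟩ := isCompact_Icc.bddAbove_image hcont
  refine ⟨max ((1 + 2 * k) / c) M2, le_max_of_le_left (by positivity), ?_⟩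
  intro z hz
  rcases le_or_gt Z z with h | h
  · obtain ⟨⟨ha, hb⟩, hone⟩ := hZ z h
    have hz2 : 0 < z ^ 2 := by positivity
    rw [abs_mul, abs_of_pos hz2] at hb
    have hexp : z ^ 2 * Real.exp (-z) ≤ 2 := by
      have := Real.quadratic_le_exp_of_nonneg hz
      rw [Real.exp_neg, mul_inv_le_iff₀ (Real.exp_pos z)]
      nlinarith
    have h3 : z ^ 2 * (|g z| + k * Real.exp (-z)) ≤ z ^ 2 * (q z * ((1 + 2 * k) / c)) := by
      have : c * ((1 + 2 * k) / c) ≤ (q z * z ^ 2) * ((1 + 2 * k) / c) := by gcongr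
      rw [mul_div_cancel₀ _ hc.ne'] at this
      nlinarith [mul_le_mul_of_nonneg_left hexp hk]
    have h4 := le_of_mul_le_mul_left h3 hz2
    refine h4.trans ?_
    have := hqpos z
    gcongr
    exact le_max_left _ _
  · have h5 := hM2 ⟨z, ⟨hz, h.le⟩, rfl⟩
    simp only at h5
    rw [div_le_iff₀ (hqpos z)] at h5
    refine h5.trans ?_
    rw [mul_comm]
    have := hqpos z
    gcongr
    exact le_max_right _ _

theorem aux_bounded_sol (q g : ℝ → ℝ) (hq : Continuous q) (hg : Continuous g) (L C : ℝ)
    (hqL : ∀ z, |q z| ≤ L) (hgC : ∀ z, |g z| ≤ C)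
    (hqpos : ∀ z, 0 < q z) (b M : ℝ) (hM0 : 0 ≤ M)
    (hM : ∀ z, 0 ≤ z → |g z| + (|b| + 1) * Real.exp (-z) ≤ q z * M) :
    ∃ v v1 φ : ℝ → ℝ, (∀ z, HasDerivAt v (v1 z) z) ∧ (∀ z, HasDerivAt v1 (φ z) z) ∧
      Continuous φ ∧ (∀ z, 0 ≤ z → φ z = q z * v z + g z) ∧ v1 0 = b ∧
      ∀ z, 0 ≤ z → |v z| ≤ M + (|b| + 1) := by
  obtain ⟨v, v1, φ, h1, h2, h3, h4, h5, h6⟩ := aux_ivp q g hq hg L C hqL hgC 0 b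
  obtain ⟨w, w1, χ, k1, k2, k3, k4, k5, k6⟩ := aux_ivp q (fun _ => 0) hq continuous_const L 0 hqL
    (by simp) 1 0
  -- the barrier
  have hE : ∀ z : ℝ, HasDerivAt (fun z => Real.exp (-z)) (-Real.exp (-z)) z := fun z => by
    simpa using (hasDerivAt_neg z).exp
  have hBar : ∀ (g' y y1 y2 : ℝ → ℝ) (R : ℝ), 0 < R → (∀ z, |g' z| ≤ |g z|) →
      (∀ z, HasDerivAt y (y1 z) z) → (∀ z, HasDerivAt y1 (y2 z) z) →
      (∀ z, 0 ≤ z → y2 z = q z * y z + g' z) → |y1 0| ≤ |b| → y R = 0 →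
      ∀ z ∈ Icc 0 R, |y z| ≤ M + (|b| + 1) * Real.exp (-z) := by
    intro g' y y1 y2 R hR hg' hy1 hy2 hy hb hyR
    apply aux_compare q g' y y1 y2 (fun z => M + (|b| + 1) * Real.exp (-z))
      (fun z => (|b| + 1) * (-Real.exp (-z))) (fun z => (|b| + 1) * (- -Real.exp (-z))) 0 R le_rfl hqpos
      hy1 hy2 hy
    · exact fun z _ => ((hE z).const_mul _).const_add _
    · exact fun z _ => ((hE z).neg).const_mul _
    · intro z hz
      have a1 := hM z hz.1.le
      have a2 := hg' z
      have a3 : 0 ≤ q z * ((|b| + 1) * Real.exp (-z)) := by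
        have := hqpos z
        positivity
      nlinarith
    · right
      simp
      linarith
    · exact hR
    · rw [hyR, abs_zero]; positivity
  have hexp1 : ∀ z : ℝ, 0 ≤ z → M + (|b| + 1) * Real.exp (-z) ≤ M + (|b| + 1) := by
    intro z hz
    have : Real.exp (-z) ≤ 1 := Real.exp_le_one_iff.2 (by linarith)
    have hb := abs_nonneg b
    nlinarith
  have hwne : ∀ R, 0 < R → w R ≠ 0 := by
    intro R hR hw
    set K := M + (|b| + 1) + 1
    have := hBar (fun _ => 0) (fun z => K * w z) (fun z => K * w1 z) (fun z => K * χ z) R hR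
      (by simp) (fun z => (k1 z).const_mul K) (fun z => (k2 z).const_mul K)
      (by intro z hz; rw [k4 z hz]; ring) (by simp [k6]) (by simp [hw]) 0 ⟨le_rfl, hR.le⟩
    have h' := this.trans (hexp1 0 le_rfl)
    simp only [k5, mul_one] at h'
    have := (le_abs_self K).trans h'
    linarith
  let a : ℕ → ℝ := fun j => -v (j + 1) / w (j + 1)
  have hab : ∀ (j : ℕ) (z : ℝ), 0 ≤ z → z ≤ j + 1 → |v z + a j * w z| ≤ M + (|b| + 1) := by
    intro j z hz hzj
    have hj : (0:ℝ) < j + 1 := by positivity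
    refine (hBar g (fun z => v z + a j * w z) (fun z => v1 z + a j * w1 z)
      (fun z => φ z + a j * χ z) (j + 1) hj (fun _ => le_rfl)
      (fun z => (h1 z).add ((k1 z).const_mul _)) (fun z => (h2 z).add ((k2 z).const_mul _)) ?_ ?_ ?_ z
      ⟨hz, hzj⟩).trans (hexp1 z hz)
    · intro z hz
      rw [h4 z hz, k4 z hz]; ring
    · simp [h6, k6]
    · have := hwne _ hj
      simp only [a]
      field_simp
      ring
  have ha : ∀ j, a j ∈ Icc (-(M + (|b| + 1))) (M + (|b| + 1)) := by
    intro j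
    have := hab j 0 le_rfl (by positivity)
    rw [h5, k5, zero_add, mul_one] at this
    exact abs_le.1 this
  obtain ⟨a0, _, ψ, hψ, hlim⟩ := isCompact_Icc.tendsto_subseq ha
  refine ⟨fun z => v z + a0 * w z, fun z => v1 z + a0 * w1 z, fun z => φ z + a0 * χ z,
      (fun z => (h1 z).add ((k1 z).const_mul _)), (fun z => (h2 z).add ((k2 z).const_mul _)),
      by fun_prop, ?_, by simp [h6, k6], ?_⟩
  · intro z hz
    simp only
    rw [h4 z hz, k4 z hz]; ring
  · intro z hz
    have ht : Tendsto (fun j => |v z + a (ψ j) * w z|) atTop (𝓝 |v z + a0 * w z|) :=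
      ((hlim.mul_const (w z)).const_add (v z)).abs
    refine le_of_tendsto ht ?_
    obtain ⟨N, hN⟩ := exists_nat_ge z
    filter_upwards [eventually_ge_atTop N] with j hj
    apply hab _ _ hz
    have : (N : ℝ) ≤ ψ j := by exact_mod_cast hj.trans (hψ.id_le j)
    linarith

/-- bounded solutions decay -/
theorem aux_decay (q g v v1 v2 : ℝ → ℝ)
    (hqpos : ∀ z, 0 < q z) (c : ℝ) (hc : 0 < c) (hqc : ∀ᶠ z in atTop, c ≤ q z * z ^ 2)
    (hg0 : Tendsto (fun z => z ^ 2 * g z) atTop (𝓝 0))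
    (h1 : ∀ z, HasDerivAt v (v1 z) z) (h2 : ∀ z, HasDerivAt v1 (v2 z) z)
    (hv : ∀ z, 0 ≤ z → v2 z = q z * v z + g z) (N : ℝ) (hN : ∀ z, 0 ≤ z → |v z| ≤ N) :
    Tendsto v atTop (𝓝 0) := by
  wlog hc2 : c ≤ 2 generalizing c
  · exact this 2 (by norm_num) (hqc.mono fun z hz => by linarith) le_rfl
  set s := c / 2 with hs
  have hs0 : 0 < s := by positivity
  have hs1 : s * (s + 1) ≤ c := by nlinarith
  have hN0 : 0 ≤ N := (abs_nonneg _).trans (hN 0 le_rfl)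
  rw [Metric.tendsto_atTop]
  intro ε hε
  have e1 : ∀ᶠ z : ℝ in atTop, |z ^ 2 * g z| ≤ c * (ε / 2) := by
    have := hg0.abs
    rw [abs_zero] at this
    exact this.eventually_le_const (by positivity)
  obtain ⟨Z, hZ⟩ := eventually_atTop.1 ((hqc.and e1).and (eventually_ge_atTop 1))
  have hZ1 : 1 ≤ Z := (hZ Z le_rfl).2
  have hZ0 : 0 < Z := by linarith
  set K := N * Z ^ s with hK
  have hK0 : 0 ≤ K := by positivity
  have hmu : ∀ μ : ℝ, 0 < μ → ∀ z, Z ≤ z → |v z| ≤ ε / 2 + K * z ^ (-s) + μ * z := by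
    intro μ hμ z hz
    have hR : Z < max (z + 1) (N / μ) := lt_max_of_lt_left (by linarith)
    refine aux_compare q g v v1 v2 (fun z => ε / 2 + K * z ^ (-s) + μ * z)
      (fun z => K * (-s * z ^ (-s - 1)) + μ) (fun z => K * (-s * ((-s - 1) * z ^ (-s - 1 - 1))))
      Z (max (z + 1) (N / μ)) hZ0.le hqpos h1 h2 hv ?_ ?_ ?_ ?_ hR ?_ z
      ⟨hz, le_max_of_le_left (by linarith)⟩
    · intro y hy
      have hy0 : y ≠ 0 := by linarith
      have := (((Real.hasDerivAt_rpow_const (p := -s) (Or.inl hy0)).const_mul K).const_add (ε/2)).add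
        ((hasDerivAt_id y).const_mul μ)
      exact this.congr_deriv (by simp)
    · intro y hy
      have hy0 : y ≠ 0 := by linarith
      exact (((Real.hasDerivAt_rpow_const (p := -s - 1) (Or.inl hy0)).const_mul (-s)).const_mul K).add_const μ
    · intro y hy
      obtain ⟨⟨b1, b2⟩, b3⟩ := hZ y hy.1.le
      have hy0 : 0 < y := by linarith
      have hy2 : 0 < y ^ 2 := by positivity
      rw [abs_mul, abs_of_pos hy2] at b2
      have e : y ^ 2 * y ^ (-s - 1 - 1) = y ^ (-s) := by
        rw [← Real.rpow_natCast y 2, ← Real.rpow_add hy0]; congr 1; push_cast; ring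
      apply le_of_mul_le_mul_left _ hy2
      have hP : 0 ≤ K * y ^ (-s) := by positivity
      have hμy : 0 ≤ μ * y := by positivity
      have t1 : c * (ε / 2 + K * y ^ (-s) + μ * y) ≤ (q y * y ^ 2) * (ε / 2 + K * y ^ (-s) + μ * y) := by
        gcongr
      have t2 : y ^ 2 * (K * (-s * ((-s - 1) * y ^ (-s - 1 - 1)))) = (s * (s + 1)) * (K * y ^ (-s)) := by
        rw [← e]; ring
      have t3 : (s * (s + 1)) * (K * y ^ (-s)) ≤ c * (K * y ^ (-s)) := by gcongr
      have t4 : 0 ≤ c * (μ * y) := by positivity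
      rw [mul_add, t2]
      nlinarith
    · left
      have : K * Z ^ (-s) = N := by
        rw [hK, mul_assoc, ← Real.rpow_add hZ0]; simp
      rw [this]
      have := hN Z hZ0.le
      have : 0 < μ * Z := by positivity
      linarith
    · have hR0 : 0 < max (z + 1) (N / μ) := hZ0.trans hR
      have a1 := hN _ hR0.le
      have a2 : N ≤ μ * max (z + 1) (N / μ) := by
        have : N / μ ≤ max (z + 1) (N / μ) := le_max_right _ _
        rw [div_le_iff₀ hμ] at this
        linarith
      have a3 : 0 ≤ K * (max (z + 1) (N / μ)) ^ (-s) := by positivity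
      linarith
  have hfin : ∀ z, Z ≤ z → |v z| ≤ ε / 2 + K * z ^ (-s) := by
    intro z hz
    apply le_of_forall_pos_le_add
    intro θ hθ
    have hz0 : 0 < z := by linarith
    have := hmu (θ / z) (by positivity) z hz
    rwa [div_mul_cancel₀ _ hz0.ne'] at this
  have hl : Tendsto (fun z : ℝ => ε / 2 + K * z ^ (-s)) atTop (𝓝 (ε / 2 + K * 0)) :=
    ((tendsto_rpow_neg_atTop hs0).const_mul K).const_add _
  have hev := hl.eventually_lt_const (show ε / 2 + K * 0 < ε by linarith)
  obtain ⟨Z', hZ'⟩ := eventually_atTop.1 (hev.and (eventually_ge_atTop Z))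
  refine ⟨Z', fun z hz => ?_⟩
  rw [Real.dist_eq, sub_zero]
  obtain ⟨c1, c2⟩ := hZ' z hz
  exact (hfin z c2).trans_lt c1

/-- existence for the linear boundary value problem on the half line -/
theorem aux_linear (q g : ℝ → ℝ) (hq : Continuous q) (hg : Continuous g) (L C : ℝ)
    (hqL : ∀ z, |q z| ≤ L) (hgC : ∀ z, |g z| ≤ C)
    (hqpos : ∀ z, 0 < q z) (c : ℝ) (hc : 0 < c) (hqc : ∀ᶠ z in atTop, c ≤ q z * z ^ 2)
    (hg0 : Tendsto (fun z => z ^ 2 * g z) atTop (𝓝 0)) (b : ℝ) :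
    ∃ v v1 φ : ℝ → ℝ, (∀ z, HasDerivAt v (v1 z) z) ∧ (∀ z, HasDerivAt v1 (φ z) z) ∧
      Continuous φ ∧ (∀ z, 0 ≤ z → φ z = q z * v z + g z) ∧ v1 0 = b ∧ Tendsto v atTop (𝓝 0) := by
  obtain ⟨M, hM0, hM⟩ := aux_barrier_const q g hq hg hqpos c hc hqc hg0 (|b| + 1) (by positivity)
  obtain ⟨v, v1, φ, h1, h2, h3, h4, h5, h6⟩ :=
    aux_bounded_sol q g hq hg L C hqL hgC hqpos b M hM0 hM
  exact ⟨v, v1, φ, h1, h2, h3, h4, h5, aux_decay q g v v1 φ hqpos c hc hqc hg0 h1 h2 h4 _ h6⟩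

theorem aux_power_id (N : ℕ) (κ δ l : ℝ) (hδN : (N : ℝ) * (1 - δ) = -3) (t : ℝ) (ht : 0 < t)
    (hD : 2 * κ * (2 * κ * l) ^ N = δ * (δ + 1)) :
    (2 * κ * t * (l * t ^ (-δ))) ^ (N + 1) = l * (δ * (δ + 1)) * t ^ (-δ - 1 - 1) := by
  have e0 : t * t ^ (-δ) = t ^ (1 - δ) := by
    rw [sub_eq_add_neg, Real.rpow_add ht, Real.rpow_one]
  have e1 : (t * t ^ (-δ)) ^ N = t ^ (-3 : ℝ) := by
    rw [e0, ← Real.rpow_natCast, ← Real.rpow_mul ht.le]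
    congr 1; linarith
  have e2 : t ^ (-δ - 1 - 1) = t * t ^ (-δ) * t ^ (-3 : ℝ) := by
    rw [e0, ← Real.rpow_add ht]; congr 1; ring
  have e3 : 2 * κ * t * (l * t ^ (-δ)) = (2 * κ * l) * (t * t ^ (-δ)) := by ring
  rw [e3, mul_pow, pow_succ, pow_succ (t * t ^ (-δ)), e1, e2, ← hD]
  ring

theorem aux_upper_s6 (N : ℕ) (κ δ l : ℝ) (hκ : 0 < κ) (hδ : 1 < δ) (hl : 0 < l)
    (hδN : (N : ℝ) * (1 - δ) = -3) (hD : 2 * κ * (2 * κ * l) ^ N = δ * (δ + 1))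
    (η η1 : ℝ → ℝ) (hη : ∀ z, 0 < z → HasDerivAt η (η1 z) z)
    (hη1 : ∀ z, 0 < z → HasDerivAt η1 ((2 * κ * z * η z + η z ^ 2) ^ (N + 1)) z)
    (hc : ContinuousOn η (Ici 0)) (hlim : Tendsto η atTop (𝓝 0)) :
    ∀ z, 0 < z → η z ≤ l * z ^ (-δ) := by
  intro z0 hz0
  by_contra hlt
  push Not at hlt
  set d : ℝ → ℝ := fun z => l * z ^ (-δ) - η z with hd
  have hd0 : d z0 < 0 := by simp only [hd]; linarith
  -- left end
  have hleft : ∀ᶠ z in 𝓝[>] (0:ℝ), 0 ≤ d z := by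
    have t1 : Tendsto (fun z : ℝ => l * z ^ (-δ)) (𝓝[>] 0) atTop :=
      (tendsto_rpow_neg_nhdsGT_zero (by linarith)).const_mul_atTop hl
    have t2 : Tendsto η (𝓝[>] 0) (𝓝 (η 0)) :=
      (hc 0 (by simp)).mono_left (nhdsWithin_mono _ Ioi_subset_Ici_self)
    filter_upwards [t1.eventually_ge_atTop (η 0 + 1), t2.eventually_le_const (show η 0 < η 0 + 1 by linarith)]
      with z ha hb
    simp only [hd]; linarith
  obtain ⟨A, hA, hAz⟩ := (hleft.and (Ioo_mem_nhdsGT hz0)).exists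
  have hright : ∀ᶠ z in atTop, d z0 / 2 ≤ d z := by
    have : Tendsto d atTop (𝓝 (l * 0 - 0)) :=
      ((tendsto_rpow_neg_atTop (by linarith)).const_mul l).sub hlim
    exact this.eventually_const_le (by linarith)
  obtain ⟨R, hR, hRz⟩ := (hright.and (eventually_gt_atTop z0)).exists
  have hder : ∀ z, 0 < z → HasDerivAt d (l * (-δ * z ^ (-δ - 1)) - η1 z) z := fun z hz =>
    ((Real.hasDerivAt_rpow_const (Or.inl hz.ne')).const_mul l).sub (hη z hz)
  have := aux_min d (fun z => l * (-δ * z ^ (-δ - 1)) - η1 z)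
    (fun z => l * (-δ * ((-δ - 1) * z ^ (-δ - 1 - 1))) - (2 * κ * z * η z + η z ^ 2) ^ (N + 1))
    A R (d z0 / 2)
    (fun z hz => (hder z (hAz.1.trans_le hz.1)).continuousAt.continuousWithinAt)
    (fun z hz => hder z (hAz.1.trans hz.1))
    (fun z hz => (((Real.hasDerivAt_rpow_const (Or.inl (hAz.1.trans hz.1).ne')).const_mul _).const_mul l).sub
      (hη1 z (hAz.1.trans hz.1)))
    (by
      intro z hz hzl
      have hz0' : 0 < z := hAz.1.trans hz.1
      have h1 : l * z ^ (-δ) < η z := by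
        simp only [hd] at hzl hd0; linarith
      have h2 := aux_power_id N κ δ l hδN z hz0' hD
      have h3 : (2 * κ * z * (l * z ^ (-δ))) ^ (N + 1) < (2 * κ * z * η z + η z ^ 2) ^ (N + 1) := by
        apply pow_lt_pow_left₀ _ (by positivity) (by omega)
        have : 2 * κ * z * (l * z ^ (-δ)) < 2 * κ * z * η z := by gcongr
        nlinarith [sq_nonneg (η z)]
      have h4 : l * (-δ * ((-δ - 1) * z ^ (-δ - 1 - 1))) = l * (δ * (δ + 1)) * z ^ (-δ - 1 - 1) := by
        ring
      linarith)
    (by intro h; exfalso; linarith) hR z0 ⟨hAz.2.le, hRz.le⟩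
  linarith

theorem aux_lower_s6 (N : ℕ) (κ δ l : ℝ) (hκ : 0 < κ) (hδ : 1 < δ) (hl : 0 < l)
    (hδN : (N : ℝ) * (1 - δ) = -3) (hD : 2 * κ * (2 * κ * l) ^ N = δ * (δ + 1))
    (η η1 : ℝ → ℝ) (hη : ∀ z, 0 < z → HasDerivAt η (η1 z) z)
    (hη1 : ∀ z, 0 < z → HasDerivAt η1 ((2 * κ * z * η z + η z ^ 2) ^ (N + 1)) z)
    (hc : ContinuousOn η (Ici 0)) (hpos : ∀ z, 0 ≤ z → 0 < η z) (hlim : Tendsto η atTop (𝓝 0)) :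
    ∃ a : ℝ, 0 < a ∧ ∀ z, 0 < z → l * (z + a) ^ (-δ) ≤ η z := by
  have hta : Tendsto (fun a : ℝ => l * a ^ (-δ)) atTop (𝓝 (l * 0)) :=
    (tendsto_rpow_neg_atTop (by linarith)).const_mul l
  rw [mul_zero] at hta
  obtain ⟨a, ⟨ha1, ha2⟩, ha3⟩ := (((hta.eventually_le_const (hpos 0 le_rfl)).and
    (hta.eventually_le_const (show 0 < 2 * κ by positivity))).and (eventually_ge_atTop 1)).exists
  have ha0 : 0 < a := by linarith
  refine ⟨a, ha0, ?_⟩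
  intro z0 hz0
  by_contra hlt
  push Not at hlt
  set d : ℝ → ℝ := fun z => η z - l * (z + a) ^ (-δ) with hd
  have hd0 : d z0 < 0 := by simp only [hd]; linarith
  have hright : ∀ᶠ z in atTop, d z0 / 2 ≤ d z := by
    have : Tendsto d atTop (𝓝 (0 - l * 0)) :=
      hlim.sub (((tendsto_rpow_neg_atTop (by linarith)).comp
        (tendsto_atTop_add_const_right atTop a tendsto_id)).const_mul l)
    exact this.eventually_const_le (by linarith)
  obtain ⟨R, hR, hRz⟩ := (hright.and (eventually_gt_atTop z0)).exists
  have hrp : ∀ (p z : ℝ), 0 < z → HasDerivAt (fun z => (z + a) ^ p) (p * (z + a) ^ (p - 1)) z := by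
    intro p z hz
    have hza : z + a ≠ 0 := by positivity
    have := ((hasDerivAt_id z).add_const a).rpow_const (p := p) (Or.inl hza)
    exact this.congr_deriv (by simp)
  have hder : ∀ z, 0 < z → HasDerivAt d (η1 z - l * (-δ * (z + a) ^ (-δ - 1))) z := fun z hz =>
    (hη z hz).sub ((hrp _ z hz).const_mul l)
  have := aux_min d (fun z => η1 z - l * (-δ * (z + a) ^ (-δ - 1)))
    (fun z => (2 * κ * z * η z + η z ^ 2) ^ (N + 1) - l * (-δ * ((-δ - 1) * (z + a) ^ (-δ - 1 - 1))))
    0 R (d z0 / 2)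
    (by
      intro z hz
      have h1 : ContinuousWithinAt η (Icc 0 R) z := (hc z hz.1).mono Icc_subset_Ici_self
      have hza : z + a ≠ 0 := by have := hz.1; positivity
      have h2 : ContinuousAt (fun z => l * (z + a) ^ (-δ)) z :=
        continuousAt_const.mul ((continuousAt_id.add continuousAt_const).rpow_const (Or.inl hza))
      exact h1.sub h2.continuousWithinAt)
    (fun z hz => hder z hz.1)
    (fun z hz => (hη1 z hz.1).sub (((hrp _ z hz.1).const_mul _).const_mul l))
    (by
      intro z hz hzl
      have hz0' : 0 < z := hz.1
      have hza : 0 < z + a := by linarith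
      have h1 : η z < l * (z + a) ^ (-δ) := by
        simp only [hd] at hzl hd0; linarith
      have h2 := aux_power_id N κ δ l hδN (z + a) hza hD
      set S := l * (z + a) ^ (-δ) with hS
      have hSa : S ≤ 2 * κ * a := by
        have : (z + a) ^ (-δ) ≤ a ^ (-δ) :=
          Real.rpow_le_rpow_of_nonpos ha0 (by linarith) (by linarith)
        have h5 : S ≤ l * a ^ (-δ) := by rw [hS]; gcongr
        nlinarith
      have hη0 := hpos z hz0'.le
      have h3 : (2 * κ * z * η z + η z ^ 2) ^ (N + 1) < (2 * κ * (z + a) * S) ^ (N + 1) := by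
        apply pow_lt_pow_left₀ _ (by positivity) (by omega)
        have h6 : 2 * κ * z * η z < 2 * κ * z * S := by gcongr
        have h7 : η z ^ 2 ≤ S * S := by nlinarith
        have h8 : S * S ≤ 2 * κ * a * S := by
          have : 0 ≤ S := by linarith
          gcongr
        nlinarith
      have h4 : l * (-δ * ((-δ - 1) * (z + a) ^ (-δ - 1 - 1))) =
          l * (δ * (δ + 1)) * (z + a) ^ (-δ - 1 - 1) := by
        ring
      linarith)
    (by
      intro h
      exfalso
      have : 0 ≤ d 0 := by simp only [hd, zero_add]; linarith
      linarith) hR z0 ⟨hz0.le, hRz.le⟩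
  linarith

/-- `f = c + O(1/z)` at infinity -/
def Apx (f : ℝ → ℝ) (c : ℝ) : Prop := (fun z => f z - c) =O[atTop] (fun z : ℝ => z⁻¹)

theorem Apx.const (c : ℝ) : Apx (fun _ => c) c := by
  simp only [Apx, sub_self]
  exact Asymptotics.isBigO_zero _ _

theorem Apx.add {f g : ℝ → ℝ} {a b : ℝ} (hf : Apx f a) (hg : Apx g b) :
    Apx (fun z => f z + g z) (a + b) := by
  have := Asymptotics.IsBigO.add hf hg
  refine this.congr_left fun z => ?_
  ring

theorem Apx.tendsto {f : ℝ → ℝ} {a : ℝ} (hf : Apx f a) : Tendsto f atTop (𝓝 a) := by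
  have h1 : Tendsto (fun z => f z - a) atTop (𝓝 0) :=
    Asymptotics.IsBigO.trans_tendsto hf tendsto_inv_atTop_zero
  simpa using h1.add_const a

theorem Apx.mul {f g : ℝ → ℝ} {a b : ℝ} (hf : Apx f a) (hg : Apx g b) :
    Apx (fun z => f z * g z) (a * b) := by
  have hb : g =O[atTop] (fun _ => (1:ℝ)) := hg.tendsto.isBigO_one ℝ
  have h1 : (fun z => (f z - a) * g z) =O[atTop] (fun z : ℝ => z⁻¹ * 1) :=
    Asymptotics.IsBigO.mul hf hb
  have h2 : (fun z => a * (g z - b)) =O[atTop] (fun z : ℝ => z⁻¹) :=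
    Asymptotics.IsBigO.const_mul_left hg a
  simp only [mul_one] at h1
  refine (h1.add h2).congr_left fun z => ?_
  ring

theorem Apx.const_mul {f : ℝ → ℝ} {a : ℝ} (c : ℝ) (hf : Apx f a) :
    Apx (fun z => c * f z) (c * a) := (Apx.const c).mul hf

theorem Apx.pow {f : ℝ → ℝ} {a : ℝ} (hf : Apx f a) (N : ℕ) :
    Apx (fun z => f z ^ N) (a ^ N) := by
  induction N with
  | zero => simpa using Apx.const 1
  | succ N ih => simpa only [pow_succ] using ih.mul hf

theorem Apx.congr {f g : ℝ → ℝ} {a b : ℝ} (hf : Apx f a) (h : ∀ z, 0 < z → g z = f z) (hab : a = b) :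
    Apx g b := by
  subst hab
  refine Asymptotics.IsBigO.congr' hf ?_ EventuallyEq.rfl
  filter_upwards [eventually_gt_atTop 0] with z hz
  rw [h z hz]

theorem Apx.rpow (a s : ℝ) : Apx (fun z => (1 + a / z) ^ s) 1 := by
  have h1 : HasDerivAt (fun x : ℝ => (1 + x) ^ s) (s * (1 + 0) ^ (s - 1)) 0 := by
    have := ((hasDerivAt_id (0:ℝ)).const_add 1).rpow_const (p := s) (Or.inl (by simp))
    exact this.congr_deriv (by simp)
  have h2 := h1.isBigO_sub
  have ht : Tendsto (fun z : ℝ => a / z) atTop (𝓝 0) := tendsto_const_nhds.div_atTop tendsto_id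
  have h3 := h2.comp_tendsto ht
  have h4 : (fun z : ℝ => a / z) =O[atTop] (fun z : ℝ => z⁻¹) := by
    simp only [div_eq_mul_inv]
    exact (Asymptotics.isBigO_refl _ _).const_mul_left a
  refine Asymptotics.IsBigO.trans ?_ h4
  refine h3.congr (fun z => ?_) (fun z => ?_)
  · simp
  · simp

theorem Apx.squeeze {f g : ℝ → ℝ} {a : ℝ} (hf : Apx f a)
    (h : ∀ z, 0 < z → |g z - a| ≤ |f z - a|) : Apx g a := by
  refine Asymptotics.IsBigO.trans (Asymptotics.IsBigO.of_bound 1 ?_) hf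
  filter_upwards [eventually_gt_atTop 0] with z hz
  simpa using h z hz

theorem Apx.tendsto_mul {f : ℝ → ℝ} {a : ℝ} (hf : Apx f a) (δ : ℝ) (hδ : 1 < δ) :
    Tendsto (fun z => z ^ (2 - δ) * (f z - a)) atTop (𝓝 0) := by
  have h1 : (fun z => z ^ (2 - δ) * (f z - a)) =O[atTop] (fun z : ℝ => z ^ (2 - δ) * z⁻¹) :=
    (Asymptotics.isBigO_refl _ _).mul hf
  refine h1.trans_tendsto ?_
  refine (tendsto_rpow_neg_atTop (show 0 < δ - 1 by linarith)).congr' ?_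
  filter_upwards [eventually_gt_atTop 0] with z hz
  rw [← Real.rpow_neg_one z, ← Real.rpow_add hz]
  congr 1; ring

theorem aux_bdd (F : ℝ → ℝ) (hF : ContinuousOn F (Ici 0)) (hlim : Tendsto F atTop (𝓝 0)) :
    ∃ C, ∀ z, |F (max z 0)| ≤ C := by
  have e1 : ∀ᶠ z : ℝ in atTop, |F z| ≤ 1 := by
    have := hlim.abs
    rw [abs_zero] at this
    exact this.eventually_le_const (by norm_num)
  obtain ⟨Z, hZ⟩ := eventually_atTop.1 e1
  have hcont : ContinuousOn (fun z => |F z|) (Icc 0 Z) := (hF.mono Icc_subset_Ici_self).abs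
  obtain ⟨M, hM⟩ := isCompact_Icc.bddAbove_image hcont
  refine ⟨max 1 M, fun z => ?_⟩
  rcases le_or_gt Z (max z 0) with h | h
  · exact (hZ _ h).trans (le_max_left _ _)
  · exact (hM ⟨max z 0, ⟨le_max_right _ _, h.le⟩, rfl⟩).trans (le_max_right _ _)

theorem aux_Y (δ l a : ℝ) (hδ : 1 < δ) (hl : 0 < l) (ha : 0 < a) (η : ℝ → ℝ)
    (hup : ∀ z, 0 < z → η z ≤ l * z ^ (-δ)) (hlo : ∀ z, 0 < z → l * (z + a) ^ (-δ) ≤ η z) :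
    Apx (fun z => z ^ δ * η z) l := by
  have h1 : Apx (fun z => l * (1 + a / z) ^ (-δ)) l :=
    ((Apx.rpow a (-δ)).const_mul l).congr (fun _ _ => rfl) (by ring)
  refine h1.squeeze ?_
  intro z hz
  have hzδ : 0 < z ^ δ := Real.rpow_pos_of_pos hz δ
  have e1 : z ^ δ * z ^ (-δ) = 1 := by rw [← Real.rpow_add hz]; simp
  have e2 : z ^ δ * (z + a) ^ (-δ) = (1 + a / z) ^ (-δ) := by
    have : z + a = z * (1 + a / z) := by field_simp
    rw [this, Real.mul_rpow hz.le (by positivity), ← mul_assoc, e1, one_mul]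
  have u1 : z ^ δ * η z ≤ l := by
    calc z ^ δ * η z ≤ z ^ δ * (l * z ^ (-δ)) := by gcongr; exact hup z hz
      _ = l * (z ^ δ * z ^ (-δ)) := by ring
      _ = l := by rw [e1, mul_one]
  have u2 : l * (1 + a / z) ^ (-δ) ≤ z ^ δ * η z := by
    calc l * (1 + a / z) ^ (-δ) = z ^ δ * (l * (z + a) ^ (-δ)) := by rw [← e2]; ring
      _ ≤ _ := by gcongr; exact hlo z hz
  rw [abs_of_nonpos (by linarith), abs_of_nonpos (by linarith)]
  linarith

theorem aux_main_s6 (N : ℕ) (κ δ l κ3 γ α l0 : ℝ) (hκ : 0 < κ) (hδ : 1 < δ) (hl : 0 < l)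
    (hδN : (N : ℝ) * (1 - δ) = -3) (hD : 2 * κ * (2 * κ * l) ^ N = δ * (δ + 1))
    (hl0 : l0 * (((N : ℝ) + 1) * (δ * (δ + 1)) - (2 - δ) * (1 - δ)) =
      γ * l - 2 * ((N : ℝ) + 1) * κ3 * l * (2 * κ * l) ^ N - α * l * δ)
    (η η1 : ℝ → ℝ) (hη : ∀ z, 0 ≤ z → HasDerivWithinAt η (η1 z) (Ici 0) z)
    (hη1 : ∀ z, 0 ≤ z →
      HasDerivWithinAt η1 ((2 * κ * z * η z + η z ^ 2) ^ (N + 1)) (Ici 0) z)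
    (hpos : ∀ z, 0 ≤ z → 0 < η z) (hlim : Tendsto η atTop (𝓝 0)) :
    ∃ h h1 h2 : ℝ → ℝ, (∀ z, 0 ≤ z → HasDerivWithinAt h (h1 z) (Ici 0) z) ∧
      (∀ z, 0 ≤ z → HasDerivWithinAt h1 (h2 z) (Ici 0) z) ∧ ContinuousOn h2 (Ici 0) ∧
      (∀ z, 0 ≤ z → h2 z + γ * η z + α * z * η1 z = ((N : ℝ) + 1) *
        (2 * κ * z * η z + η z ^ 2) ^ N * ((2 * κ * z + 2 * η z) * h z + 2 * κ3 * z ^ 3 * η z)) ∧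
      h1 0 = 0 ∧ Tendsto (fun z => h z - l0 * z ^ (2 - δ)) atTop (𝓝 0) := by
  have hc : ContinuousOn η (Ici 0) := fun z hz => (hη z hz).continuousWithinAt
  have hc1 : ContinuousOn η1 (Ici 0) := fun z hz => (hη1 z hz).continuousWithinAt
  have hηi : ∀ z, 0 < z → HasDerivAt η (η1 z) z := fun z hz =>
    (hη z hz.le).hasDerivAt (Ici_mem_nhds hz)
  have hη1i : ∀ z, 0 < z → HasDerivAt η1 ((2 * κ * z * η z + η z ^ 2) ^ (N + 1)) z := fun z hz =>
    (hη1 z hz.le).hasDerivAt (Ici_mem_nhds hz)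
  have hup := aux_upper_s6 N κ δ l hκ hδ hl hδN hD η η1 hηi hη1i hc hlim
  obtain ⟨a, ha, hlo⟩ := aux_lower_s6 N κ δ l hκ hδ hl hδN hD η η1 hηi hη1i hc hpos hlim
  have hY := aux_Y δ l a hδ hl ha η hup hlo
  set Y : ℝ → ℝ := fun z => z ^ δ * η z with hYdef
  have hδ0 : 0 < δ := by linarith
  -- X / z
  have hX : Apx (fun z => z ^ (-δ) * z⁻¹) 0 := by
    have h1 : (fun z : ℝ => z ^ (-δ)) =O[atTop] (fun _ => (1:ℝ)) :=
      (tendsto_rpow_neg_atTop hδ0).isBigO_one ℝ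
    have := h1.mul (Asymptotics.isBigO_refl (fun z : ℝ => z⁻¹) atTop)
    simpa [Apx] using this
  set p : ℝ → ℝ := fun z => Y z * (1 + 1 / (2 * κ) * (Y z * (z ^ (-δ) * z⁻¹))) with hp
  have hpA : Apx p l :=
    (hY.mul ((Apx.const 1).add ((hY.mul hX).const_mul (1 / (2 * κ))))).congr (fun _ _ => rfl) (by ring)
  set c := l0 + α * l / 4 with hcdef
  set Q : ℝ → ℝ := fun z => ((N : ℝ) + 1) * (2 * κ * z * η z + η z ^ 2) ^ N * (2 * κ * z + 2 * η z)
    with hQ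
  set ψ : ℝ → ℝ := fun z => -(α / 4) * (z ^ 2 * η z) + c * (1 + z) ^ (2 - δ) with hψ
  set G : ℝ → ℝ := fun z => Q z * ψ z - γ * η z
    + 2 * ((N : ℝ) + 1) * κ3 * z ^ 3 * η z * (2 * κ * z * η z + η z ^ 2) ^ N
    + α / 4 * (2 * η z + z ^ 2 * (2 * κ * z * η z + η z ^ 2) ^ (N + 1))
    - c * ((2 - δ) * ((1 - δ) * (1 + z) ^ (-δ))) with hG
  -- pointwise identities
  have hηX : ∀ z, 0 < z → η z = z ^ (-δ) * Y z := by
    intro z hz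
    simp only [hYdef]
    rw [← mul_assoc, ← Real.rpow_add hz]; simp
  have hP : ∀ z, 0 < z → 2 * κ * z * η z + η z ^ 2 = 2 * κ * (z * z ^ (-δ)) * p z := by
    intro z hz
    simp only [hp]
    rw [hηX z hz]
    field_simp
  have hPN : ∀ z, 0 < z → (2 * κ * z * η z + η z ^ 2) ^ N = (2 * κ) ^ N * (z ^ 3)⁻¹ * p z ^ N := by
    intro z hz
    rw [hP z hz, mul_pow, mul_pow]
    congr 2
    have e0 : z * z ^ (-δ) = z ^ (1 - δ) := by
      rw [sub_eq_add_neg, Real.rpow_add hz, Real.rpow_one]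
    rw [e0, ← Real.rpow_natCast, ← Real.rpow_mul hz.le, mul_comm, hδN, Real.rpow_neg hz.le]
    norm_cast
  have hQz : ∀ z, 0 < z → Q z * z ^ 2 =
      ((N : ℝ) + 1) * (2 * κ) ^ N * p z ^ N * (2 * κ + 2 * (Y z * (z ^ (-δ) * z⁻¹))) := by
    intro z hz
    simp only [hQ]
    rw [hPN z hz, hηX z hz]
    field_simp
  have hQA : Apx (fun z => Q z * z ^ 2) (((N : ℝ) + 1) * (δ * (δ + 1))) := by
    refine Apx.congr (((hpA.pow N).const_mul (((N : ℝ) + 1) * (2 * κ) ^ N)).mul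
      ((Apx.const (2 * κ)).add ((hY.mul hX).const_mul 2))) hQz ?_
    rw [← hD, mul_pow]; ring
  set ρ : ℝ → ℝ := fun z => (1 + 1 / z) ^ (-δ) with hρ
  have hρA : Apx ρ 1 := Apx.rpow 1 (-δ)
  have hone : Apx (fun z => 1 + 1 / z) 1 := (Apx.rpow 1 1).congr (fun z _ => by simp) rfl
  have hρ1 : ∀ z, 0 < z → (1 + z) ^ (-δ) = z ^ (-δ) * ρ z := by
    intro z hz
    have : 1 + z = z * (1 + 1 / z) := by field_simp; ring
    rw [this, Real.mul_rpow hz.le (by positivity)]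
  have hρ2 : ∀ z, 0 < z → (1 + z) ^ (2 - δ) = z ^ 2 * z ^ (-δ) * ((1 + 1 / z) ^ 2 * ρ z) := by
    intro z hz
    have : (1 + z) ^ (2 - δ) = (1 + z) ^ 2 * (1 + z) ^ (-δ) := by
      rw [sub_eq_add_neg, Real.rpow_add (by positivity)]; norm_cast
    rw [this, hρ1 z hz]
    field_simp
    ring
  set r : ℝ → ℝ := fun z => -(α / 4) * Y z + c * ((1 + 1 / z) ^ 2 * ρ z) with hr
  have hrA : Apx r l0 := by
    refine ((hY.const_mul (-(α / 4))).add (((hone.pow 2).mul hρA).const_mul c)).congr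
      (fun _ _ => rfl) ?_
    rw [hcdef]; ring
  have hψr : ∀ z, 0 < z → ψ z = z ^ 2 * z ^ (-δ) * r z := by
    intro z hz
    simp only [hψ, hr]
    rw [hρ2 z hz, hηX z hz]; ring
  have hGz : ∀ z, 0 < z → z ^ δ * G z = (Q z * z ^ 2) * r z + ((-γ) * Y z
      + (2 * ((N : ℝ) + 1) * κ3 * (2 * κ) ^ N) * (Y z * p z ^ N)
      + α / 4 * (2 * Y z + (2 * κ) ^ (N + 1) * p z ^ (N + 1))
      + (- c * (2 - δ) * (1 - δ)) * ρ z) := by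
    intro z hz
    have hz1 : z ^ δ * z ^ (-δ) = 1 := by rw [← Real.rpow_add hz]; simp
    have e : G z = z ^ (-δ) * ((Q z * z ^ 2) * r z + ((-γ) * Y z
      + (2 * ((N : ℝ) + 1) * κ3 * (2 * κ) ^ N) * (Y z * p z ^ N)
      + α / 4 * (2 * Y z + (2 * κ) ^ (N + 1) * p z ^ (N + 1))
      + (- c * (2 - δ) * (1 - δ)) * ρ z)) := by
      have hPN1 : (2 * κ * z * η z + η z ^ 2) ^ (N + 1) =
          (2 * κ) ^ N * (z ^ 3)⁻¹ * p z ^ N * (2 * κ * (z * z ^ (-δ)) * p z) := by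
        rw [pow_succ, hPN z hz, hP z hz]
      simp only [hG]
      rw [hPN1, hPN z hz, hψr z hz, hρ1 z hz, hηX z hz, pow_succ, pow_succ]
      field_simp
      ring
    rw [e, ← mul_assoc, hz1, one_mul]
  have hGA : Apx (fun z => z ^ δ * G z) 0 := by
    refine Apx.congr ((hQA.mul hrA).add ((((hY.const_mul (-γ)).add
      ((hY.mul (hpA.pow N)).const_mul (2 * ((N : ℝ) + 1) * κ3 * (2 * κ) ^ N))).add
      (((hY.const_mul 2).add ((hpA.pow (N + 1)).const_mul ((2 * κ) ^ (N + 1)))).const_mul (α / 4))).add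
      (hρA.const_mul (- c * (2 - δ) * (1 - δ))))) hGz ?_
    have hD' : (2 * κ) ^ (N + 1) * l ^ (N + 1) = l * (δ * (δ + 1)) := by
      rw [← hD, mul_pow]; ring
    have hE : (2 * κ) ^ N * l ^ N = (2 * κ * l) ^ N := (mul_pow _ _ _).symm
    rw [hD', hcdef]
    linear_combination hl0 + 2 * ((N : ℝ) + 1) * κ3 * l * hE
  have hG2 : Tendsto (fun z => z ^ 2 * G z) atTop (𝓝 0) := by
    refine (hGA.tendsto_mul δ hδ).congr' ?_
    filter_upwards [eventually_gt_atTop 0] with z hz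
    rw [sub_zero, ← mul_assoc, ← Real.rpow_add hz, sub_add_cancel]
    norm_cast
  have hinv2 : Tendsto (fun z : ℝ => (z ^ 2)⁻¹) atTop (𝓝 0) :=
    (tendsto_pow_atTop (by norm_num)).inv_tendsto_atTop
  have hG0 : Tendsto G atTop (𝓝 0) := by
    have := hG2.mul hinv2
    rw [mul_zero] at this
    refine this.congr' ?_
    filter_upwards [eventually_gt_atTop 0] with z hz
    field_simp
  have hQ0 : Tendsto Q atTop (𝓝 0) := by
    have := hQA.tendsto.mul hinv2
    rw [mul_zero] at this
    refine this.congr' ?_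
    filter_upwards [eventually_gt_atTop 0] with z hz
    field_simp
  -- continuity
  have hrc : ∀ s : ℝ, ContinuousOn (fun z : ℝ => (1 + z) ^ s) (Ici 0) := by
    intro s z hz
    have : 1 + z ≠ 0 := by have : 0 ≤ z := hz; positivity
    exact ((continuousAt_const.add continuousAt_id).rpow_const (Or.inl this)).continuousWithinAt
  have hrc1 := hrc (2 - δ)
  have hrc2 := hrc (-δ)
  have hQc : ContinuousOn Q (Ici 0) := by
    simp only [hQ]; fun_prop
  have hψc : ContinuousOn ψ (Ici 0) := by
    simp only [hψ]; fun_prop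
  have hGc : ContinuousOn G (Ici 0) := by
    simp only [hG]; fun_prop
  have hmaxc : Continuous (fun z : ℝ => max z 0) := by fun_prop
  obtain ⟨L, hL⟩ := aux_bdd Q hQc hQ0
  obtain ⟨C, hC⟩ := aux_bdd G hGc hG0
  have hQpos : ∀ z, 0 ≤ z → 0 < Q z := by
    intro z hz
    have := hpos z hz
    simp only [hQ]; positivity
  have hDpos : 0 < ((N : ℝ) + 1) * (δ * (δ + 1)) := by positivity
  obtain ⟨v, v1, φ, k1, k2, k3, k4, k5, k6⟩ := aux_linear (fun z => Q (max z 0)) (fun z => G (max z 0))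
    (hQc.comp_continuous hmaxc fun z => mem_Ici.2 (le_max_right z 0))
    (hGc.comp_continuous hmaxc fun z => mem_Ici.2 (le_max_right z 0)) L C hL hC
    (fun z => hQpos _ (le_max_right _ _)) (((N : ℝ) + 1) * (δ * (δ + 1)) / 2) (by positivity)
    (by
      filter_upwards [hQA.tendsto.eventually_const_le
        (show ((N : ℝ) + 1) * (δ * (δ + 1)) / 2 < _ by linarith), eventually_ge_atTop 0] with z hz hz0
      rwa [max_eq_left hz0])
    (by
      refine hG2.congr' ?_
      filter_upwards [eventually_ge_atTop 0] with z hz0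
      rw [max_eq_left hz0])
    (-(c * (2 - δ)))
  have hrd : ∀ (s z : ℝ), 0 ≤ z → HasDerivWithinAt (fun z => (1 + z) ^ s) (s * (1 + z) ^ (s - 1)) (Ici 0) z := by
    intro s z hz
    have hza : 1 + z ≠ 0 := by positivity
    have := ((hasDerivAt_id z).const_add 1).rpow_const (p := s) (Or.inl hza)
    exact (this.congr_deriv (by simp)).hasDerivWithinAt
  have hsq : ∀ z : ℝ, HasDerivWithinAt (fun z : ℝ => z ^ 2) (2 * z) (Ici 0) z := fun z => by
    simpa using (hasDerivAt_pow 2 z).hasDerivWithinAt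
  refine ⟨fun z => v z + ψ z,
    fun z => v1 z + (-(α / 4) * (2 * z * η z + z ^ 2 * η1 z) + c * ((2 - δ) * (1 + z) ^ (1 - δ))),
    fun z => φ z + (-(α / 4) * (2 * η z + 4 * z * η1 z + z ^ 2 * (2 * κ * z * η z + η z ^ 2) ^ (N + 1))
      + c * ((2 - δ) * ((1 - δ) * (1 + z) ^ (-δ)))), ?_, ?_, ?_, ?_, ?_, ?_⟩
  · intro z hz
    have e : 2 - δ - 1 = 1 - δ := by ring
    have := hrd (2 - δ) z hz
    rw [e] at this
    exact (k1 z).hasDerivWithinAt.add ((((hsq z).mul (hη z hz)).const_mul _).add (this.const_mul c))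
  · intro z hz
    have e : 1 - δ - 1 = -δ := by ring
    have := hrd (1 - δ) z hz
    rw [e] at this
    have h2z : HasDerivWithinAt (fun z : ℝ => 2 * z) 2 (Ici 0) z := by
      simpa using ((hasDerivAt_id z).const_mul (2:ℝ)).hasDerivWithinAt
    have := (k2 z).hasDerivWithinAt.add (((((h2z.mul (hη z hz)).add ((hsq z).mul (hη1 z hz))).const_mul
      (-(α / 4)))).add ((this.const_mul (2 - δ)).const_mul c))
    refine this.congr_deriv ?_
    ring
  · fun_prop
  · intro z hz
    beta_reduce
    rw [k4 z hz, max_eq_left hz]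
    simp only [hG, hQ]
    ring
  · simp [k5]
  · have h1 := k6.add (hrA.tendsto_mul δ hδ)
    rw [add_zero] at h1
    refine h1.congr' ?_
    filter_upwards [eventually_gt_atTop 0] with z hz
    have e : z ^ (2 - δ) = z ^ 2 * z ^ (-δ) := by
      rw [sub_eq_add_neg, Real.rpow_add hz]; norm_cast
    rw [hψr z hz, e]; ring

theorem aux_hasDeriv_of_contDiffOn (f : ℝ → ℝ) (hf : ContDiffOn ℝ 2 f (Ici 0)) :
    (∀ z, 0 ≤ z → HasDerivWithinAt f (derivWithin f (Ici 0) z) (Ici 0) z) ∧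
    (∀ z, 0 ≤ z → HasDerivWithinAt (derivWithin f (Ici 0))
      (derivWithin (derivWithin f (Ici 0)) (Ici 0) z) (Ici 0) z) := by
  have hu : UniqueDiffOn ℝ (Ici (0:ℝ)) := uniqueDiffOn_Ici 0
  have h2 : ContDiffOn ℝ (1 + 1) f (Ici 0) := by
    convert hf using 1; norm_num
  obtain ⟨h3, _, h4⟩ := (contDiffOn_succ_iff_derivWithin hu).1 h2
  exact ⟨fun z hz => (h3 z hz).hasDerivWithinAt,
    fun z hz => (h4.differentiableOn (by norm_num) z hz).hasDerivWithinAt⟩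

theorem aux_contDiffOn (h h1 h2 : ℝ → ℝ) (k1 : ∀ z, 0 ≤ z → HasDerivWithinAt h (h1 z) (Ici 0) z)
    (k2 : ∀ z, 0 ≤ z → HasDerivWithinAt h1 (h2 z) (Ici 0) z) (k3 : ContinuousOn h2 (Ici 0)) :
    ContDiffOn ℝ 2 h (Ici 0) ∧ (∀ z, 0 ≤ z → derivWithin h (Ici 0) z = h1 z) ∧
    (∀ z, 0 ≤ z → derivWithin (derivWithin h (Ici 0)) (Ici 0) z = h2 z) := by
  have hu : UniqueDiffOn ℝ (Ici (0:ℝ)) := uniqueDiffOn_Ici 0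
  have e1 : ∀ z, 0 ≤ z → derivWithin h (Ici 0) z = h1 z := fun z hz =>
    (k1 z hz).derivWithin (hu z hz)
  have e2 : ∀ z, 0 ≤ z → derivWithin h1 (Ici 0) z = h2 z := fun z hz =>
    (k2 z hz).derivWithin (hu z hz)
  have e3 : ∀ z, 0 ≤ z → derivWithin (derivWithin h (Ici 0)) (Ici 0) z = h2 z := fun z hz => by
    have e4 : EqOn (derivWithin h (Ici 0)) h1 (Ici 0) := fun x hx => e1 x hx
    rw [derivWithin_congr e4 (e1 z hz), e2 z hz]
  refine ⟨?_, e1, e3⟩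
  have c1 : ContDiffOn ℝ 1 h1 (Ici 0) := by
    have : ContDiffOn ℝ (0 + 1) h1 (Ici 0) := by
      rw [contDiffOn_succ_iff_derivWithin hu]
      refine ⟨fun z hz => (k2 z hz).differentiableWithinAt, by simp, ?_⟩
      rw [contDiffOn_zero]
      exact k3.congr fun z hz => e2 z hz
    simpa using this
  have : ContDiffOn ℝ (1 + 1) h (Ici 0) := by
    rw [contDiffOn_succ_iff_derivWithin hu]
    refine ⟨fun z hz => (k1 z hz).differentiableWithinAt, by simp, ?_⟩
    exact c1.congr fun z hz => e1 z hz
  convert this using 1; norm_num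

theorem aux_unique (q d d1 d2 : ℝ → ℝ) (hq : ∀ z, 0 ≤ z → 0 ≤ q z)
    (k1 : ∀ z, 0 ≤ z → HasDerivWithinAt d (d1 z) (Ici 0) z)
    (k2 : ∀ z, 0 ≤ z → HasDerivWithinAt d1 (d2 z) (Ici 0) z)
    (hd : ∀ z, 0 ≤ z → d2 z = q z * d z) (h0 : d1 0 = 0) (hlim : Tendsto d atTop (𝓝 0)) :
    ∀ z, 0 ≤ z → d z = 0 := by
  have hmono : ∀ f f1 : ℝ → ℝ, (∀ z, 0 ≤ z → HasDerivWithinAt f (f1 z) (Ici 0) z) →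
      (∀ z, 0 ≤ z → 0 ≤ f1 z) → MonotoneOn f (Ici 0) := by
    intro f f1 hf hf1
    apply monotoneOn_of_hasDerivWithinAt_nonneg (f' := f1) (convex_Ici 0)
      (fun z hz => (hf z hz).continuousWithinAt)
    · intro z hz
      exact (hf z (interior_subset hz)).mono interior_subset
    · intro z hz
      exact hf1 z (interior_subset hz)
  have m1 : MonotoneOn (fun z => d z * d1 z) (Ici 0) := by
    apply hmono _ (fun z => d1 z * d1 z + d z * d2 z) (fun z hz => (k1 z hz).mul (k2 z hz))
    intro z hz
    rw [hd z hz]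
    nlinarith [mul_self_nonneg (d1 z), mul_nonneg (hq z hz) (mul_self_nonneg (d z))]
  have m2 : MonotoneOn (fun z => d z * d z) (Ici 0) := by
    apply hmono _ (fun z => d1 z * d z + d z * d1 z) (fun z hz => (k1 z hz).mul (k1 z hz))
    intro z hz
    have := m1 (mem_Ici.2 le_rfl) (mem_Ici.2 hz) hz
    simp only [h0, mul_zero] at this
    linarith
  intro z hz
  have h1 : d z * d z ≤ 0 := by
    have := hlim.mul hlim
    rw [mul_zero] at this
    refine ge_of_tendsto this ?_
    filter_upwards [eventually_ge_atTop z] with y hy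
    exact m2 (mem_Ici.2 hz) (mem_Ici.2 (hz.trans hy)) hy
  have := mul_self_nonneg (d z)
  exact mul_self_eq_zero.1 (le_antisymm h1 this)

theorem kap_pos : 0 < kap := by
  unfold kap
  have := Real.pi_pos
  positivity

/-- For every integer n ≥ 4 there exists a unique corrector h. -/
theorem corrector_exists_unique (n : ℕ) (hn : 4 ≤ n)
    (η : ℝ → ℝ) (hη : IsReactiveProfile n η) :
    (∃ h : ℝ → ℝ, IsCorrector n η h) ∧
    (∀ h h' : ℝ → ℝ, IsCorrector n η h → IsCorrector n η h' →
      Set.EqOn h h' (Set.Ici 0)) := by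
  obtain ⟨N, rfl⟩ : ∃ N, n = N + 1 := ⟨n - 1, by omega⟩
  obtain ⟨hC2, hpos, hode, _, hlim⟩ := hη
  obtain ⟨e1, e2⟩ := aux_hasDeriv_of_contDiffOn η hC2
  have hκ := kap_pos
  have hN : (3:ℝ) ≤ N := by exact_mod_cast (by omega : 3 ≤ N)
  have hN0 : (N : ℝ) ≠ 0 := by linarith
  constructor
  · have hdel : del (N + 1) = ((N : ℝ) + 3) / N := by
      unfold del; push_cast; congr 1 <;> ring
    have hδ : 1 < del (N + 1) := by
      rw [hdel, lt_div_iff₀ (by linarith)]; linarith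
    have hbase : 0 < del (N + 1) * (del (N + 1) + 1) / (2 * kap) ^ (N + 1) := by positivity
    have hl : 0 < lam (N + 1) := by
      unfold lam
      exact Real.rpow_pos_of_pos hbase _
    have hlN : lam (N + 1) ^ N = del (N + 1) * (del (N + 1) + 1) / (2 * kap) ^ (N + 1) := by
      unfold lam
      rw [← Real.rpow_natCast, ← Real.rpow_mul hbase.le]
      push_cast
      rw [add_sub_cancel_right, one_div, inv_mul_cancel₀ hN0, Real.rpow_one]
    have hD : 2 * kap * (2 * kap * lam (N + 1)) ^ N = del (N + 1) * (del (N + 1) + 1) := by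
      rw [mul_pow, hlN]
      field_simp
      try ring
    have hγ : gam (N + 1) * (del (N + 1) + 1) = eps (N + 1) := by
      rw [hdel]; unfold gam eps; push_cast
      rw [add_sub_cancel_right]
      have : 2 * ((N:ℝ) + 1) + 1 ≠ 0 := by positivity
      field_simp
      ring
    have hEN : (2 * kap * lam (N + 1)) ^ N = del (N + 1) * (del (N + 1) + 1) / (2 * kap) := by
      rw [← hD]; field_simp
    obtain ⟨h, h1, h2, k1, k2, k3, k4, k5, k6⟩ := aux_main_s6 N kap (del (N + 1)) (lam (N + 1)) kap3
      (gam (N + 1)) (alph (N + 1)) (lam0 (N + 1)) hκ hδ hl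
      (by rw [hdel]; field_simp; ring) hD
      (by
        have hden : ((((N + 1 : ℕ) : ℝ) - 1) * del (N + 1) * (del (N + 1) + 1)
            + 2 * (2 * del (N + 1) - 1)) ≠ 0 := by
          have : 0 < ((((N + 1 : ℕ) : ℝ) - 1) * del (N + 1) * (del (N + 1) + 1)
            + 2 * (2 * del (N + 1) - 1)) := by
            push_cast
            rw [add_sub_cancel_right]
            have : 0 < (N:ℝ) * del (N + 1) * (del (N + 1) + 1) := by positivity
            linarith
          exact this.ne'
        rw [hEN]
        have e : ((N : ℝ) + 1) * (del (N + 1) * (del (N + 1) + 1)) - (2 - del (N + 1)) * (1 - del (N + 1))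
            = ((((N + 1 : ℕ) : ℝ) - 1) * del (N + 1) * (del (N + 1) + 1)
            + 2 * (2 * del (N + 1) - 1)) := by push_cast; ring
        rw [e]
        unfold lam0
        rw [div_mul_cancel₀ _ hden, ← hγ]
        unfold alph
        push_cast
        field_simp
        ring)
      η (derivWithin η (Ici 0)) e1
      (fun z hz => (e2 z hz).congr_deriv (hode z hz)) hpos hlim
    obtain ⟨c1, c2, c3⟩ := aux_contDiffOn h h1 h2 k1 k2 k3
    refine ⟨h, c1, ?_, by rw [c2 0 le_rfl, k5], k6⟩
    intro z hz
    rw [c3 z hz]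
    simpa using k4 z hz
  · rintro h h' ⟨a1, a2, a3, a4⟩ ⟨b1, b2, b3, b4⟩
    obtain ⟨f1, f2⟩ := aux_hasDeriv_of_contDiffOn h a1
    obtain ⟨g1, g2⟩ := aux_hasDeriv_of_contDiffOn h' b1
    have := aux_unique
      (fun z => ((N + 1 : ℕ) : ℝ) * (2 * kap * z * η z + (η z) ^ 2) ^ (N + 1 - 1) * (2 * kap * z + 2 * η z))
      (fun z => h z - h' z) _ _ (by
        intro z hz
        have := hpos z hz
        positivity) (fun z hz => (f1 z hz).sub (g1 z hz)) (fun z hz => (f2 z hz).sub (g2 z hz))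
      (by
        intro z hz
        have u1 := a2 z hz
        have u2 := b2 z hz
        linear_combination u1 - u2) (by rw [a3, b3, sub_zero]) (by
        have := a4.sub b4
        rw [sub_zero] at this
        refine this.congr fun z => ?_
        ring)
    intro z hz
    exact sub_eq_zero.1 (this z hz)
end
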